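/- arXiv:0809.3554 — 8 statements merged into one kernel-verified Lean document; each statement's English description precedes it below -/
import Mathlib

section
/- The achievable region equals the outer bound: C̲ = C̄. (This is the algebraic content of the capacity theorem for the deterministic many-to-one interference channel: the Minkowski sum of the per-level regions and the interference-free region coincides exactly with the polytope cut out by the individual rate constraints and the 2^K − 1 sum-rate constraints.) -/
open Finset Pointwise

/-- The set `U_k` of users (indices `i ≠ 0`) potentially causing interference at
receiver 0 on level `k`:  `n_{0i} - n_{ii} < k ≤ n_{0i}`.  Here `nd i = n_{ii}` are the
direct gains and `nc i = n_{0i}` are the cross gains. -/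
def Uset (K : ℕ) (nd nc : Fin (K + 1) → ℕ) (k : ℕ) : Finset (Fin (K + 1)) :=
  Finset.univ.filter fun i => i ≠ 0 ∧ (nc i : ℤ) - (nd i : ℤ) < (k : ℤ) ∧ (k : ℤ) ≤ (nc i : ℤ)

/-- `f_free(i) = (n_{ii} - n_{0i})⁺ + (n_{0i} - n_{00})⁺` (truncated subtraction on ℕ). -/
def ffree (K : ℕ) (nd nc : Fin (K + 1) → ℕ) (i : Fin (K + 1)) : ℕ :=
  (nd i - nc i) + (nc i - nd 0)

/-- The right-hand side of the sum-rate constraint on `S ∪ {0}`: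
`f_free(S) + ∑_{k=1}^{n_{00}} f_k(S)` where `f_k(S) = max(|U_k ∩ S|, 1)`. -/
def sumBound (K : ℕ) (nd nc : Fin (K + 1) → ℕ) (S : Finset (Fin (K + 1))) : ℕ :=
  (∑ i ∈ S, ffree K nd nc i) +
    ∑ k ∈ Finset.Icc 1 (nd 0), max ((Uset K nd nc k ∩ S).card) 1

/-- The outer-bound polytope `C̄`. -/
def outerRegion (K : ℕ) (nd nc : Fin (K + 1) → ℕ) : Set (Fin (K + 1) → ℝ) :=
  {r | (∀ i, 0 ≤ r i ∧ r i ≤ (nd i : ℝ)) ∧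
    ∀ S : Finset (Fin (K + 1)), 0 ∉ S → S.Nonempty →
      r 0 + ∑ i ∈ S, r i ≤ (sumBound K nd nc S : ℝ)}

/-- The interference-free region `C_free`. -/
def Cfree (K : ℕ) (nd nc : Fin (K + 1) → ℕ) : Set (Fin (K + 1) → ℝ) :=
  {r | r 0 = 0 ∧ ∀ i, i ≠ 0 → 0 ≤ r i ∧ r i ≤ (ffree K nd nc i : ℝ)}

/-- The single-level region `C_k`. -/
def Clevel (K : ℕ) (nd nc : Fin (K + 1) → ℕ) (k : ℕ) : Set (Fin (K + 1) → ℝ) :=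
  {r | 0 ≤ r 0 ∧ r 0 ≤ 1 ∧
    (∀ i ∈ Uset K nd nc k, 0 ≤ r i ∧ r i ≤ 1 ∧ r 0 + r i ≤ 1) ∧
    (∀ i, i ≠ 0 → i ∉ Uset K nd nc k → r i = 0)}

/-- The achievable region `C̲ = C_free + ∑_{k=1}^{n_{00}} C_k` (Minkowski sum of sets). -/
def achievableRegion (K : ℕ) (nd nc : Fin (K + 1) → ℕ) : Set (Fin (K + 1) → ℝ) :=
  Cfree K nd nc + ∑ k ∈ Finset.Icc 1 (nd 0), Clevel K nd nc k

/-!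
Once the rates `x k` of user `0` on the levels `k` are fixed, every region in the Minkowski sum is a
box, so user `i` can reach any rate up to `n_ii - ∑ x k`, the sum being over the levels that `i`
interferes with. Achievability of `r` thus says that `r 0` is the total of a fractional packing
`0 ≤ x ≤ 1` in which the levels of user `i` carry at most `n_ii - r i`. The sum-rate constraints
say that `r 0` is at most the cost of covering all levels, where user `i` covers its levels at price
`n_ii - r i` and a single level may be covered at price `1`. One direction is weak duality. For the
other, each user interferes with an interval of levels, so the increments of the cost of covering
the first `k` levels form a packing whose total is the full cost, and scaling it down gives `r 0`.
-/

section FractionalPacking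

variable {ι κ 𝕜 : Type*} [Ring 𝕜] [LinearOrder 𝕜] {L : Finset κ} {A : ι → Finset κ} {J : Finset ι}
  {d : ι → 𝕜} {x : κ → 𝕜}

/-- `x` is a fractional packing of the points of `L`, each of capacity `1`, under the constraint
that the block `A i` carries at most `d i` for every `i ∈ J`. -/
structure IsFractionalPacking (L : Finset κ) (A : ι → Finset κ) (J : Finset ι) (d : ι → 𝕜)
    (x : κ → 𝕜) : Prop where
  mem_Icc : ∀ k ∈ L, x k ∈ Set.Icc 0 1
  sum_le : ∀ i ∈ J, ∑ k ∈ A i, x k ≤ d i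

variable [IsOrderedRing 𝕜]

theorem IsFractionalPacking.nonneg (hx : IsFractionalPacking L A J d x) {i : ι} (hi : i ∈ J)
    (hA : A i ⊆ L) : 0 ≤ d i :=
  (sum_nonneg fun k hk => (hx.mem_Icc k (hA hk)).1).trans (hx.sum_le i hi)

theorem IsFractionalPacking.const_mul {t : 𝕜} (ht : t ∈ Set.Icc 0 1) (hd : ∀ i ∈ J, 0 ≤ d i)
    (hx : IsFractionalPacking L A J d x) : IsFractionalPacking L A J d fun k => t * x k where
  mem_Icc k hk := ⟨mul_nonneg ht.1 (hx.mem_Icc k hk).1,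
    mul_le_one₀ ht.2 (hx.mem_Icc k hk).1 (hx.mem_Icc k hk).2⟩
  sum_le i hi := by
    rw [← mul_sum]
    exact (mul_le_mul_of_nonneg_left (hx.sum_le i hi) ht.1).trans
      (mul_le_of_le_one_left (hd i hi) ht.2)

end FractionalPacking

section CoverCost

variable {ι κ 𝕜 : Type*} [DecidableEq κ] [Ring 𝕜] [LinearOrder 𝕜] {A : ι → Finset κ}
  {J S : Finset ι} {T T' : Finset κ} {d : ι → 𝕜}

/-- The least cost of covering `T` when the block `A i` costs `d i` for `i ∈ J` and a single point
costs `1`: the integral dual of the fractional packing problem. -/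
def coverCost (A : ι → Finset κ) (J : Finset ι) (d : ι → 𝕜) (T : Finset κ) : 𝕜 :=
  J.powerset.inf' (powerset_nonempty J) fun S => ∑ i ∈ S, d i + #(T \ S.biUnion A)

theorem le_coverCost_iff {c : 𝕜} :
    c ≤ coverCost A J d T ↔ ∀ S ⊆ J, c ≤ ∑ i ∈ S, d i + #(T \ S.biUnion A) := by
  simp only [coverCost, le_inf'_iff, mem_powerset]

theorem coverCost_le (hS : S ⊆ J) : coverCost A J d T ≤ ∑ i ∈ S, d i + #(T \ S.biUnion A) :=
  le_coverCost_iff.1 le_rfl S hS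

variable [IsOrderedRing 𝕜]

theorem coverCost_mono : Monotone (coverCost A J d) := fun T T' hT =>
  le_coverCost_iff.2 fun S hS => (coverCost_le hS).trans <| by gcongr

theorem coverCost_empty (hd : ∀ i ∈ J, 0 ≤ d i) : coverCost A J d ∅ = 0 := by
  refine le_antisymm ?_ (le_coverCost_iff.2 fun S hS => ?_)
  · simpa using coverCost_le (A := A) (d := d) (T := ∅) (empty_subset J)
  · simpa using sum_nonneg fun i hi => hd i (hS hi)

theorem coverCost_le_add_card_sdiff :
    coverCost A J d T' ≤ coverCost A J d T + #(T' \ T) := by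
  refine sub_le_iff_le_add.1 (le_coverCost_iff.2 fun S hS => sub_le_iff_le_add.2 ?_)
  have hcard : #(T' \ S.biUnion A) ≤ #(T \ S.biUnion A) + #(T' \ T) :=
    (card_le_card (by grind)).trans (card_union_le _ _)
  calc coverCost A J d T' ≤ ∑ i ∈ S, d i + #(T' \ S.biUnion A) := coverCost_le hS
    _ ≤ ∑ i ∈ S, d i + (#(T \ S.biUnion A) + #(T' \ T)) := by
      rw [← Nat.cast_add]
      gcongr
    _ = _ := (add_assoc _ _ _).symm

theorem coverCost_le_add_of_sdiff_subset {i : ι} (hi : i ∈ J) (hdi : 0 ≤ d i) (hT : T' \ T ⊆ A i) :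
    coverCost A J d T' ≤ coverCost A J d T + d i := by
  classical
  refine sub_le_iff_le_add.1 (le_coverCost_iff.2 fun S hS => sub_le_iff_le_add.2 ?_)
  have hsum : ∑ j ∈ insert i S, d j ≤ d i + ∑ j ∈ S, d j := by
    by_cases hiS : i ∈ S
    · simpa [hiS] using hdi
    · exact (sum_insert hiS).le
  have hsub : T' \ (insert i S).biUnion A ⊆ T \ S.biUnion A := by
    rw [biUnion_insert]
    grind
  calc coverCost A J d T'
      ≤ ∑ j ∈ insert i S, d j + #(T' \ (insert i S).biUnion A) :=
        coverCost_le (insert_subset hi hS)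
    _ ≤ d i + ∑ j ∈ S, d j + #(T \ S.biUnion A) := by gcongr
    _ = _ := by abel

theorem sum_biUnion_le_sum_sum {M : Type*} [AddCommMonoid M] [PartialOrder M]
    [IsOrderedAddMonoid M] {x : κ → M} (hx : ∀ i ∈ S, ∀ k ∈ A i, 0 ≤ x k) :
    ∑ k ∈ S.biUnion A, x k ≤ ∑ i ∈ S, ∑ k ∈ A i, x k := by
  classical
  induction S using Finset.induction_on with
  | empty => simp
  | insert i S hi ih =>
    have hinter : 0 ≤ ∑ k ∈ A i ∩ S.biUnion A, x k :=
      sum_nonneg fun k hk => hx i (mem_insert_self i S) k (mem_inter.1 hk).1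
    calc ∑ k ∈ (insert i S).biUnion A, x k
        ≤ ∑ k ∈ A i ∪ S.biUnion A, x k + ∑ k ∈ A i ∩ S.biUnion A, x k := by
          rw [biUnion_insert]
          exact le_add_of_nonneg_right hinter
      _ = ∑ k ∈ A i, x k + ∑ k ∈ S.biUnion A, x k := sum_union_inter
      _ ≤ ∑ k ∈ A i, x k + ∑ j ∈ S, ∑ k ∈ A j, x k := by
          gcongr
          exact ih fun j hj => hx j (mem_insert_of_mem hj)
      _ = ∑ j ∈ insert i S, ∑ k ∈ A j, x k := by rw [sum_insert hi]

theorem IsFractionalPacking.sum_le_coverCost {L : Finset κ} {x : κ → 𝕜}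
    (hx : IsFractionalPacking L A J d x) (hA : ∀ i ∈ J, A i ⊆ L) :
    ∑ k ∈ L, x k ≤ coverCost A J d L := by
  refine le_coverCost_iff.2 fun S hS => ?_
  have hcov : S.biUnion A ⊆ L := biUnion_subset.2 fun i hi => hA i (hS hi)
  rw [← sum_sdiff hcov, add_comm]
  gcongr ?_ + ?_
  · calc ∑ k ∈ S.biUnion A, x k ≤ ∑ i ∈ S, ∑ k ∈ A i, x k :=
          sum_biUnion_le_sum_sum fun i hi k hk => (hx.mem_Icc k (hA i (hS hi) hk)).1
      _ ≤ ∑ i ∈ S, d i := sum_le_sum fun i hi => hx.sum_le i (hS hi)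
  · simpa using sum_le_card_nsmul _ _ 1 fun k hk => (hx.mem_Icc k (mem_sdiff.1 hk).1).2

end CoverCost

section IntervalPacking

variable {ι 𝕜 : Type*} {J : Finset ι} {a b : ι → ℕ} {d : ι → 𝕜} {n : ℕ}

theorem sum_Ioc_sub_pred {M : Type*} [AddCommGroup M] (f : ℕ → M) {m n : ℕ} (h : m ≤ n) :
    ∑ k ∈ Ioc m n, (f k - f (k - 1)) = f n - f m := by
  induction n, h using Nat.le_induction with
  | base => simp
  | succ n hmn ih =>
    rw [sum_Ioc_succ_top hmn, ih, Nat.add_sub_cancel]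
    abel

theorem isFractionalPacking_coverCost_sub [Ring 𝕜] [LinearOrder 𝕜] [IsOrderedRing 𝕜]
    (hd : ∀ i ∈ J, 0 ≤ d i) :
    IsFractionalPacking (Ioc 0 n) (fun i => Ioc (a i) (b i)) J d fun k =>
      coverCost (fun i => Ioc (a i) (b i)) J d (Ioc 0 k) -
        coverCost (fun i => Ioc (a i) (b i)) J d (Ioc 0 (k - 1)) where
  mem_Icc k hk := by
    have hcard : #(Ioc 0 k \ Ioc 0 (k - 1)) = 1 := by
      rw [card_sdiff_of_subset (Ioc_subset_Ioc_right (k.sub_le 1)), Nat.card_Ioc, Nat.card_Ioc]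
      grind
    refine ⟨sub_nonneg.2 (coverCost_mono (Ioc_subset_Ioc_right (k.sub_le 1))),
      sub_le_iff_le_add'.2 ?_⟩
    simpa [hcard] using coverCost_le_add_card_sdiff (T := Ioc 0 (k - 1)) (T' := Ioc 0 k)
  sum_le i hi := by
    obtain hab | hba := le_total (a i) (b i)
    · rw [sum_Ioc_sub_pred (fun k => coverCost _ J d (Ioc 0 k)) hab, sub_le_iff_le_add']
      exact coverCost_le_add_of_sdiff_subset hi (hd i hi) (by grind)
    · simpa [Ioc_eq_empty_of_le hba] using hd i hi

variable [Field 𝕜] [LinearOrder 𝕜] [IsStrictOrderedRing 𝕜]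

theorem exists_mem_Icc_mul_eq {r T : 𝕜} (hr : r ∈ Set.Icc 0 T) :
    ∃ t ∈ Set.Icc (0 : 𝕜) 1, t * T = r := by
  simpa using (Set.image_mul_right_Icc zero_le_one (hr.1.trans hr.2)).superset (by simpa using hr)

theorem exists_isFractionalPacking_Ioc_iff {r : 𝕜} (hb : ∀ i ∈ J, b i ≤ n) :
    (∃ x, IsFractionalPacking (Ioc 0 n) (fun i => Ioc (a i) (b i)) J d x ∧
        ∑ k ∈ Ioc 0 n, x k = r) ↔
      (∀ i ∈ J, 0 ≤ d i) ∧ r ∈ Set.Icc 0 (coverCost (fun i => Ioc (a i) (b i)) J d (Ioc 0 n)) := by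
  have hA : ∀ i ∈ J, Ioc (a i) (b i) ⊆ Ioc 0 n := fun i hi =>
    Ioc_subset_Ioc (Nat.zero_le _) (hb i hi)
  constructor
  · rintro ⟨x, hx, rfl⟩
    exact ⟨fun i hi => hx.nonneg hi (hA i hi), sum_nonneg fun k hk => (hx.mem_Icc k hk).1,
      hx.sum_le_coverCost hA⟩
  · rintro ⟨hd, hr⟩
    obtain ⟨t, ht, rfl⟩ := exists_mem_Icc_mul_eq hr
    refine ⟨_, (isFractionalPacking_coverCost_sub hd).const_mul ht hd, ?_⟩
    rw [← mul_sum, sum_Ioc_sub_pred (fun k => coverCost _ J d (Ioc 0 k)) n.zero_le, Ioc_self,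
      coverCost_empty hd, sub_zero]

end IntervalPacking

section Channel

variable {K : ℕ} {nd nc : Fin (K + 1) → ℕ} {r : Fin (K + 1) → ℝ} {i : Fin (K + 1)} {k : ℕ}

/-- The levels `k ∈ {1, …, n_00}` of receiver `0` with `i ∈ U_k`, written as an interval. The lower
end `n_0i - n_ii` is truncated at `0`. -/
def interferedLevels (nd nc : Fin (K + 1) → ℕ) (i : Fin (K + 1)) : Finset ℕ :=
  Ioc (nc i - nd i) (min (nc i) (nd 0))

theorem interferedLevels_subset : interferedLevels nd nc i ⊆ Ioc 0 (nd 0) :=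
  Ioc_subset_Ioc (Nat.zero_le _) (min_le_right _ _)

theorem mem_Uset_iff_mem_interferedLevels (hi : i ≠ 0) (hk : k ∈ Ioc 0 (nd 0)) :
    i ∈ Uset K nd nc k ↔ k ∈ interferedLevels nd nc i := by
  simp only [Uset, interferedLevels, mem_filter, mem_univ, true_and, mem_Ioc] at hk ⊢
  omega

theorem sum_ite_mem_Uset {M : Type*} [AddCommMonoid M] (hi : i ≠ 0) (f : ℕ → M) :
    ∑ k ∈ Ioc 0 (nd 0), (if i ∈ Uset K nd nc k then f k else 0) =
      ∑ k ∈ interferedLevels nd nc i, f k := by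
  rw [← sum_filter]
  congr 1
  ext k
  rw [mem_filter]
  exact ⟨fun h => (mem_Uset_iff_mem_interferedLevels hi h.1).1 h.2, fun h =>
    have hk := interferedLevels_subset h
    ⟨hk, (mem_Uset_iff_mem_interferedLevels hi hk).2 h⟩⟩

theorem ffree_add_card_interferedLevels (hreg : nc i ≤ nd 0 + nd i) :
    ffree K nd nc i + #(interferedLevels nd nc i) = nd i := by
  rw [interferedLevels, Nat.card_Ioc, ffree]
  omega

theorem mem_Clevel_iff :
    r ∈ Clevel K nd nc k ↔ r 0 ∈ Set.Icc 0 1 ∧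
      ∀ i ≠ 0, r i ∈ Set.Icc 0 (if i ∈ Uset K nd nc k then 1 - r 0 else 0) := by
  have hU : ∀ i ∈ Uset K nd nc k, i ≠ 0 := fun i hi => (mem_filter.1 hi).2.1
  constructor
  · rintro ⟨h0, h1, hmem, hnot⟩
    refine ⟨⟨h0, h1⟩, fun i hi => ?_⟩
    split_ifs with hiU
    · exact ⟨(hmem i hiU).1, le_sub_iff_add_le'.2 (hmem i hiU).2.2⟩
    · simp [hnot i hi hiU]
  · rintro ⟨⟨h0, h1⟩, hbox⟩
    refine ⟨h0, h1, fun i hiU => ?_, fun i hi hiU => by simpa [hiU] using hbox i hi⟩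
    obtain ⟨hi0, hi1⟩ : r i ∈ Set.Icc 0 (1 - r 0) := by simpa [hiU] using hbox i (hU i hiU)
    exact ⟨hi0, by linarith, by linarith⟩

theorem mem_achievableRegion_iff :
    r ∈ achievableRegion K nd nc ↔ ∃ x : ℕ → ℝ, (∀ k ∈ Ioc 0 (nd 0), x k ∈ Set.Icc 0 1) ∧
      ∑ k ∈ Ioc 0 (nd 0), x k = r 0 ∧ ∀ i ≠ 0,
        r i ∈ Set.Icc 0 (ffree K nd nc i + ∑ k ∈ interferedLevels nd nc i, (1 - x k)) := by
  have hIcc : Icc 1 (nd 0) = Ioc 0 (nd 0) := Icc_succ_left_eq_Ioc 0 _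
  simp only [achievableRegion, Set.mem_add, Set.mem_finsetSum, hIcc]
  constructor
  · rintro ⟨f, ⟨hf0, hf⟩, _, ⟨g, hg, rfl⟩, rfl⟩
    have hg' := fun k hk => mem_Clevel_iff.1 (hg (i := k) hk)
    refine ⟨fun k => g k 0, fun k hk => (hg' k hk).1, by simp [hf0], fun i hi => ?_⟩
    rw [← sum_ite_mem_Uset hi, Pi.add_apply, Finset.sum_apply]
    exact ⟨add_nonneg (hf i hi).1 (sum_nonneg fun k hk => ((hg' k hk).2 i hi).1),
      add_le_add (hf i hi).2 (sum_le_sum fun k hk => ((hg' k hk).2 i hi).2)⟩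
  · rintro ⟨x, hx, hsum, hbox⟩
    choose! t ht htr using fun i hi => exists_mem_Icc_mul_eq (hbox i hi)
    let cap (k : ℕ) (i : Fin (K + 1)) : ℝ := if i ∈ Uset K nd nc k then 1 - x k else 0
    refine ⟨fun i => if i = 0 then 0 else t i * ffree K nd nc i, ⟨if_pos rfl, fun i hi => ?_⟩, _,
      ⟨fun k i => if i = 0 then x k else t i * cap k i, fun {k} hk => ?_, rfl⟩, ?_⟩
    · simp only [if_neg hi]
      exact ⟨mul_nonneg (ht i hi).1 (Nat.cast_nonneg _),
        mul_le_of_le_one_left (Nat.cast_nonneg _) (ht i hi).2⟩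
    · refine mem_Clevel_iff.2 ⟨by simpa using hx k hk, fun i hi => ?_⟩
      have hcap : 0 ≤ cap k i := ite_nonneg (sub_nonneg.2 (hx k hk).2) le_rfl
      simpa only [if_neg hi, if_pos] using
        ⟨mul_nonneg (ht i hi).1 hcap, mul_le_of_le_one_left hcap (ht i hi).2⟩
    · ext i
      rw [Pi.add_apply, Finset.sum_apply]
      by_cases hi : i = 0
      · simp [hi, hsum]
      · simp only [if_neg hi, cap]
        rw [← mul_sum, ← mul_add, sum_ite_mem_Uset hi, htr i hi]

theorem mem_achievableRegion_iff_exists_isFractionalPacking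
    (hreg : ∀ i ≠ 0, nc i ≤ nd 0 + nd i) :
    r ∈ achievableRegion K nd nc ↔ (∀ i ≠ 0, 0 ≤ r i) ∧ ∃ x,
      IsFractionalPacking (Ioc 0 (nd 0)) (interferedLevels nd nc) {0}ᶜ (fun i => nd i - r i) x ∧
        ∑ k ∈ Ioc 0 (nd 0), x k = r 0 := by
  have hroom : ∀ (x : ℕ → ℝ), ∀ i ≠ 0,
      (r i ≤ ffree K nd nc i + ∑ k ∈ interferedLevels nd nc i, (1 - x k) ↔
        ∑ k ∈ interferedLevels nd nc i, x k ≤ nd i - r i) := by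
    intro x i hi
    rw [← ffree_add_card_interferedLevels (hreg i hi), sum_sub_distrib, sum_const, nsmul_one,
      Nat.cast_add, add_sub_assoc', le_sub_comm]
  rw [mem_achievableRegion_iff]
  constructor
  · rintro ⟨x, hx, hsum, hbox⟩
    refine ⟨fun i hi => (hbox i hi).1, x, ⟨hx, fun i hi => ?_⟩, hsum⟩
    have hi : i ≠ 0 := by simpa using hi
    exact (hroom x i hi).1 (hbox i hi).2
  · rintro ⟨hr, x, hx, hsum⟩
    exact ⟨x, hx.mem_Icc, hsum, fun i hi => ⟨hr i hi, (hroom x i hi).2 (hx.sum_le i (by simpa))⟩⟩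

theorem max_card_Uset_inter_one {S : Finset (Fin (K + 1))} (hS : 0 ∉ S) (hk : k ∈ Ioc 0 (nd 0)) :
    max #(Uset K nd nc k ∩ S) 1 = (∑ i ∈ S, if i ∈ Uset K nd nc k then 1 else 0) +
      if k ∈ S.biUnion (interferedLevels nd nc) then 0 else 1 := by
  have hcovered : k ∈ S.biUnion (interferedLevels nd nc) ↔ (Uset K nd nc k ∩ S).Nonempty := by
    rw [mem_biUnion, Finset.Nonempty]
    refine exists_congr fun i => ?_
    rw [mem_inter, and_comm]
    refine and_congr_left fun hi => ?_
    rw [mem_Uset_iff_mem_interferedLevels (ne_of_mem_of_not_mem hi hS) hk]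
  rw [← card_filter, filter_mem_eq_inter, inter_comm S]
  simp only [hcovered]
  split_ifs with h
  · exact max_eq_left h.card_pos
  · simp [not_nonempty_iff_eq_empty.1 h]

theorem sumBound_eq_sum_add_card_sdiff (hreg : ∀ i ≠ 0, nc i ≤ nd 0 + nd i)
    {S : Finset (Fin (K + 1))} (hS : 0 ∉ S) :
    sumBound K nd nc S =
      ∑ i ∈ S, nd i + #(Ioc 0 (nd 0) \ S.biUnion (interferedLevels nd nc)) := by
  have hIcc : Icc 1 (nd 0) = Ioc 0 (nd 0) := Icc_succ_left_eq_Ioc 0 _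
  have huser : ∀ i ∈ S, ffree K nd nc i +
      ∑ k ∈ Ioc 0 (nd 0), (if i ∈ Uset K nd nc k then 1 else 0) = nd i := fun i hi => by
    have hi0 : i ≠ 0 := ne_of_mem_of_not_mem hi hS
    rw [sum_ite_mem_Uset hi0, ← card_eq_sum_ones, ffree_add_card_interferedLevels (hreg i hi0)]
  rw [sumBound, hIcc, sum_congr rfl fun k hk => max_card_Uset_inter_one hS hk, sum_add_distrib,
    sum_comm, ← add_assoc, ← sum_add_distrib, sum_congr rfl huser, sdiff_eq_filter, card_filter]
  simp only [ite_not]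

theorem mem_outerRegion_iff (hreg : ∀ i ≠ 0, nc i ≤ nd 0 + nd i) :
    r ∈ outerRegion K nd nc ↔ (∀ i ≠ 0, 0 ≤ r i) ∧
      (∀ i ∈ ({0}ᶜ : Finset (Fin (K + 1))), 0 ≤ (nd i : ℝ) - r i) ∧
      r 0 ∈ Set.Icc 0
        (coverCost (interferedLevels nd nc) {0}ᶜ (fun i => (nd i : ℝ) - r i) (Ioc 0 (nd 0))) := by
  have hcut : ∀ S : Finset (Fin (K + 1)), 0 ∉ S → (r 0 + ∑ i ∈ S, r i ≤ sumBound K nd nc S ↔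
      r 0 ≤ ∑ i ∈ S, (nd i - r i) + #(Ioc 0 (nd 0) \ S.biUnion (interferedLevels nd nc))) := by
    intro S hS
    rw [sumBound_eq_sum_add_card_sdiff hreg hS, sum_sub_distrib, sub_add_eq_add_sub,
      le_sub_iff_add_le]
    push_cast
    rfl
  simp only [outerRegion, Set.mem_ofPred_eq, Set.mem_Icc, le_coverCost_iff, subset_compl_singleton,
    mem_compl, mem_singleton, sub_nonneg]
  constructor
  · rintro ⟨hbox, hsum⟩
    refine ⟨fun i _ => (hbox i).1, fun i _ => (hbox i).2, (hbox 0).1, fun S hS => ?_⟩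
    obtain rfl | hne := S.eq_empty_or_nonempty
    · simpa using (hbox 0).2
    · exact (hcut S hS).1 (hsum S hS hne)
  · rintro ⟨hpos, hle, h0, hsum⟩
    refine ⟨fun i => ?_, fun S hS _ => (hcut S hS).2 (hsum S hS)⟩
    obtain rfl | hi := eq_or_ne i 0
    · exact ⟨h0, by simpa using hsum ∅ (notMem_empty 0)⟩
    · exact ⟨hpos i hi, hle i hi⟩

end Channel

/-- The achievable region equals the outer bound for the deterministic many-to-one
interference channel:  `C̲ = C̄`. -/
theorem achievable_eq_outer (K : ℕ) (hK : 1 ≤ K) (nd nc : Fin (K + 1) → ℕ)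
    (hreg : ∀ i : Fin (K + 1), i ≠ 0 → nc i ≤ nd 0 + nd i) :
    achievableRegion K nd nc = outerRegion K nd nc := by
  ext r
  rw [mem_achievableRegion_iff_exists_isFractionalPacking hreg, mem_outerRegion_iff hreg]
  exact and_congr_right' (exists_isFractionalPacking_Ioc_iff fun _ _ => min_le_right _ _)
end

section
/- For every compatible collection A of constraints of C̄ there exists a rate point r ∈ C̲ that satisfies every constraint in A with equality (i.e., every corner assignment corresponding to a pairwise compatible family of constraints is simultaneously achievable by the level-allocation scheme). -/
open Finset Pointwise

/-- A constraint of the outer bound `C̄`: either an individual rate constraint on a user,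
or a sum-rate constraint on a set `S ⊆ {1,…,K}` of interfering users. -/
inductive MTOConstraint (K : ℕ) where
  | indiv : Fin (K + 1) → MTOConstraint K
  | sumRate : Finset (Fin (K + 1)) → MTOConstraint K

/-- Validity: a sum-rate constraint must be on a nonempty subset of `{1,…,K}`. -/
def MTOConstraint.Valid {K : ℕ} : MTOConstraint K → Prop
  | .indiv _ => True
  | .sumRate S => S.Nonempty ∧ 0 ∉ S

/-- Solid neighbours of a constraint in the bipartite graph on levels `{1,…,n_{00}}`. -/
def Nsolid (K : ℕ) (nd nc : Fin (K + 1) → ℕ) : MTOConstraint K → Finset ℕ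
  | .indiv i =>
      if i = 0 then ∅ else (Finset.Icc 1 (nd 0)).filter fun k => i ∈ Uset K nd nc k
  | .sumRate S =>
      (Finset.Icc 1 (nd 0)).filter fun k => 2 ≤ (Uset K nd nc k ∩ S).card

/-- Dashed neighbours of a constraint in the bipartite graph on levels `{1,…,n_{00}}`. -/
def Ndashed (K : ℕ) (nd nc : Fin (K + 1) → ℕ) : MTOConstraint K → Finset ℕ
  | .indiv i => if i = 0 then Finset.Icc 1 (nd 0) else ∅
  | .sumRate S =>
      (Finset.Icc 1 (nd 0)).filter fun k => Uset K nd nc k ∩ S = ∅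

/-- Two constraints are compatible if no solid edge of one meets a dashed edge of the other. -/
def Compatible (K : ℕ) (nd nc : Fin (K + 1) → ℕ) (v v' : MTOConstraint K) : Prop :=
  Nsolid K nd nc v ∩ Ndashed K nd nc v' = ∅ ∧ Nsolid K nd nc v' ∩ Ndashed K nd nc v = ∅

/-- A rate point satisfies a constraint with equality. -/
def TightAt (K : ℕ) (nd nc : Fin (K + 1) → ℕ) (r : Fin (K + 1) → ℝ) :
    MTOConstraint K → Prop
  | .indiv i => r i = (nd i : ℝ)
  | .sumRate S => r 0 + ∑ i ∈ S, r i = (sumBound K nd nc S : ℝ)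

/-!
If some constraint of the collection has a dashed edge to level `k`, give that level to user `0`
alone; otherwise let all the users of `U_k` transmit on it and keep user `0` silent. A constraint
is tight at the resulting rate point as soon as user `0` holds all of its dashed levels (where no
user of the constraint reaches user `0`) and none of its solid levels (where giving way to user `0`
would lose rate). The first condition holds by construction, and the second is compatibility. On a
level with neither edge both choices contribute the same amount.
-/

section

variable {K : ℕ} {nd nc : Fin (K + 1) → ℕ} {i : Fin (K + 1)} {S : Finset (Fin (K + 1))}
  {D : Set ℕ} {k : ℕ}

/-- The point of `C_free` at which every user `i ≠ 0` fills its interference-free capacity. -/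
def freeRate (nd nc : Fin (K + 1) → ℕ) (i : Fin (K + 1)) : ℝ :=
  if i = 0 then 0 else ffree K nd nc i

open Classical in
/-- The corner of `C_k` chosen when `D` is the set of levels assigned to user `0`: on a level of
`D` user `0` transmits alone, on any other level all the users of `U_k` transmit and user `0` is
silent. -/
noncomputable def levelRate (nd nc : Fin (K + 1) → ℕ) (D : Set ℕ) (k : ℕ) : Fin (K + 1) → ℝ :=
  if k ∈ D then Pi.single 0 1 else Set.indicator (Uset K nd nc k) 1

/-- The rate point of the level allocation in which `D` is the set of levels assigned to
user `0`. -/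
noncomputable def allocation (nd nc : Fin (K + 1) → ℕ) (D : Set ℕ) : Fin (K + 1) → ℝ :=
  freeRate nd nc + ∑ k ∈ Icc 1 (nd 0), levelRate nd nc D k

theorem zero_notMem_Uset (k : ℕ) : 0 ∉ Uset K nd nc k := by
  simp [Uset]

theorem filter_mem_Uset_eq_Ioc (hi : i ≠ 0) :
    {k ∈ Icc 1 (nd 0) | i ∈ Uset K nd nc k} = Ioc (nc i - nd i) (min (nc i) (nd 0)) := by
  ext k
  simp only [Uset, mem_filter, mem_univ, true_and, mem_Icc, mem_Ioc, le_min_iff, ne_eq, hi,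
    not_false_eq_true]
  omega

theorem ffree_add_card_filter_mem_Uset (hi : i ≠ 0) (hreg : nc i ≤ nd 0 + nd i) :
    ffree K nd nc i + #{k ∈ Icc 1 (nd 0) | i ∈ Uset K nd nc k} = nd i := by
  rw [filter_mem_Uset_eq_Ioc hi, Nat.card_Ioc, ffree]
  omega

theorem freeRate_mem_Cfree : freeRate nd nc ∈ Cfree K nd nc :=
  ⟨if_pos rfl, fun i hi => by simp [freeRate, hi]⟩

theorem single_zero_one_mem_Clevel (k : ℕ) : Pi.single 0 1 ∈ Clevel K nd nc k := by
  refine ⟨by simp, by simp, fun i hi => ?_, fun i hi _ => Pi.single_eq_of_ne hi 1⟩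
  have hi0 : i ≠ 0 := ne_of_mem_of_not_mem hi (zero_notMem_Uset k)
  simp [hi0]

theorem indicator_Uset_mem_Clevel (k : ℕ) :
    Set.indicator (Uset K nd nc k) 1 ∈ Clevel K nd nc k := by
  have h0 := zero_notMem_Uset (nd := nd) (nc := nc) k
  exact ⟨by simp [h0], by simp [h0], fun i hi => by simp [h0, hi], fun i _ hi => by simp [hi]⟩

theorem levelRate_mem_Clevel (D : Set ℕ) (k : ℕ) : levelRate nd nc D k ∈ Clevel K nd nc k := by
  unfold levelRate
  split_ifs
  · exact single_zero_one_mem_Clevel k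
  · exact indicator_Uset_mem_Clevel k

theorem allocation_mem_achievableRegion (D : Set ℕ) :
    allocation nd nc D ∈ achievableRegion K nd nc :=
  Set.add_mem_add freeRate_mem_Cfree <|
    Set.finsetSum_mem_finsetSum _ _ _ fun k _ => levelRate_mem_Clevel D k

theorem allocation_apply (D : Set ℕ) (i : Fin (K + 1)) :
    allocation nd nc D i = freeRate nd nc i + ∑ k ∈ Icc 1 (nd 0), levelRate nd nc D k i := by
  simp only [allocation, Pi.add_apply, Finset.sum_apply]

theorem allocation_zero (hD : (Icc 1 (nd 0) : Set ℕ) ⊆ D) : allocation nd nc D 0 = nd 0 := by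
  have hone : ∀ k ∈ Icc 1 (nd 0), levelRate nd nc D k 0 = 1 := fun k hk => by
    simp [levelRate, hD hk]
  rw [allocation_apply, sum_congr rfl hone]
  simp [freeRate]

theorem allocation_of_ne_zero (hi : i ≠ 0) (hreg : nc i ≤ nd 0 + nd i)
    (hD : ∀ k ∈ Icc 1 (nd 0), i ∈ Uset K nd nc k → k ∉ D) :
    allocation nd nc D i = nd i := by
  have hlevel : ∀ k ∈ Icc 1 (nd 0),
      levelRate nd nc D k i = if i ∈ Uset K nd nc k then 1 else 0 := fun k hk => by
    by_cases hU : i ∈ Uset K nd nc k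
    · simp [levelRate, hD k hk hU, hU]
    · by_cases hkD : k ∈ D <;> simp [levelRate, hkD, hU, hi]
  rw [allocation_apply, sum_congr rfl hlevel, sum_boole, freeRate, if_neg hi]
  exact_mod_cast ffree_add_card_filter_mem_Uset hi hreg

theorem levelRate_zero_add_sum (hS : 0 ∉ S) (hmem : k ∈ D → #(Uset K nd nc k ∩ S) ≤ 1)
    (hnotMem : k ∉ D → (Uset K nd nc k ∩ S).Nonempty) :
    levelRate nd nc D k 0 + ∑ i ∈ S, levelRate nd nc D k i =
      (max #(Uset K nd nc k ∩ S) 1 : ℕ) := by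
  by_cases hk : k ∈ D
  · simp [levelRate, hk, hS, max_eq_right (hmem hk)]
  · rw [max_eq_left (hnotMem hk).card_pos]
    simp [levelRate, hk, zero_notMem_Uset, Set.indicator_apply, inter_comm]

theorem allocation_zero_add_sum (hS : 0 ∉ S)
    (hmem : ∀ k ∈ Icc 1 (nd 0), k ∈ D → #(Uset K nd nc k ∩ S) ≤ 1)
    (hnotMem : ∀ k ∈ Icc 1 (nd 0), k ∉ D → (Uset K nd nc k ∩ S).Nonempty) :
    allocation nd nc D 0 + ∑ i ∈ S, allocation nd nc D i = sumBound K nd nc S := by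
  have hfree : freeRate nd nc 0 + ∑ i ∈ S, freeRate nd nc i = ∑ i ∈ S, (ffree K nd nc i : ℝ) := by
    rw [freeRate, if_pos rfl, zero_add]
    exact sum_congr rfl fun i hi => if_neg (ne_of_mem_of_not_mem hi hS)
  calc
    allocation nd nc D 0 + ∑ i ∈ S, allocation nd nc D i =
        (freeRate nd nc 0 + ∑ i ∈ S, freeRate nd nc i) +
          ∑ k ∈ Icc 1 (nd 0), (levelRate nd nc D k 0 + ∑ i ∈ S, levelRate nd nc D k i) := by
      simp only [allocation_apply, sum_add_distrib, sum_comm (s := S)]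
      ring
    _ = ∑ i ∈ S, (ffree K nd nc i : ℝ) +
          ∑ k ∈ Icc 1 (nd 0), ((max #(Uset K nd nc k ∩ S) 1 : ℕ) : ℝ) := by
      rw [hfree, sum_congr rfl fun k hk => levelRate_zero_add_sum hS (hmem k hk) (hnotMem k hk)]
    _ = sumBound K nd nc S := by
      rw [sumBound, Nat.cast_add, Nat.cast_sum, Nat.cast_sum]

theorem tightAt_allocation (hreg : ∀ i : Fin (K + 1), i ≠ 0 → nc i ≤ nd 0 + nd i)
    {v : MTOConstraint K} (hv : v.Valid) (hsolid : Disjoint (Nsolid K nd nc v : Set ℕ) D)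
    (hdashed : (Ndashed K nd nc v : Set ℕ) ⊆ D) : TightAt K nd nc (allocation nd nc D) v := by
  have hs : ∀ k ∈ Nsolid K nd nc v, k ∉ D := fun k hk => Set.disjoint_left.1 hsolid hk
  have hd : ∀ k ∉ D, k ∉ Ndashed K nd nc v := fun k hkD hk => hkD (hdashed hk)
  rcases v with i | S
  · rcases eq_or_ne i 0 with rfl | hi
    · exact allocation_zero (by simpa only [Ndashed, if_pos] using hdashed)
    · simp only [Nsolid, if_neg hi, mem_filter, and_imp] at hs
      exact allocation_of_ne_zero hi (hreg i hi) hs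
  · simp only [Nsolid, mem_filter, and_imp] at hs
    simp only [Ndashed, mem_filter, not_and, ← nonempty_iff_ne_empty] at hd
    exact allocation_zero_add_sum hv.2
      (fun k hk hkD => Nat.le_of_lt_succ <| not_le.1 fun hcard => hs k hk hcard hkD)
      (fun k hk hkD => hd k hkD hk)

end

/-- For every pairwise compatible collection `A` of constraints of `C̄` there exists a rate
point `r ∈ C̲` satisfying every constraint in `A` with equality. -/
theorem compatible_implies_achievable (K : ℕ) (hK : 1 ≤ K) (nd nc : Fin (K + 1) → ℕ)
    (hreg : ∀ i : Fin (K + 1), i ≠ 0 → nc i ≤ nd 0 + nd i)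
    (A : Set (MTOConstraint K))
    (hvalid : ∀ v ∈ A, v.Valid)
    (hcompat : ∀ v ∈ A, ∀ v' ∈ A, Compatible K nd nc v v') :
    ∃ r ∈ achievableRegion K nd nc, ∀ v ∈ A, TightAt K nd nc r v := by
  refine ⟨allocation nd nc (⋃ v ∈ A, Ndashed K nd nc v), allocation_mem_achievableRegion _,
    fun v hv => tightAt_allocation hreg (hvalid v hv) ?_ ?_⟩
  · simp only [Set.disjoint_iUnion₂_right, disjoint_coe]
    exact fun w hw => disjoint_iff_inter_eq_empty.2 (hcompat v hv w hw).1
  · exact Set.subset_biUnion_of_mem (u := fun w => (Ndashed K nd nc w : Set ℕ)) hv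
end

section
/- If a collection of constraints of C̄ is consistent — that is, some point of C̄ satisfies every constraint in the collection with equality — then the collection is compatible. Equivalently (contrapositive): if two constraints v, v′ of C̄ are incompatible, then no point of C̄ satisfies both of them with equality. -/
open Finset

/-!
If a solid edge of one tight constraint and a dashed edge of another end at a common level, the two
constraints can be regrouped into constraints of `C̄` with the same total left-hand side and a
strictly smaller total bound, which no point of `C̄` allows.

For two sum-rate constraints `S`, `S'`, the regrouping splits the users of `S` and `S'` between new
sets `T`, `T'` so that every level seen at least twice in total by `S` and `S'` is seen by both `T`
and `T'`; this is possible because a finite family of intervals can be 2-coloured so that every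
point lying in two of them lies in intervals of both colours. On each level the sum of the
`f_k` cannot grow, and it drops by one on the level of the incompatibility. An individual constraint
`i ≠ 0` is merged into `S` instead. The individual constraint `0` is the sum-rate constraint of `∅`.
-/

section Intervals

variable {ι α : Type*} [LinearOrder α]

theorem exists_coloring_of_intervals (s : Finset ι) (l u : ι → α) :
    ∃ c : ι → Bool, ∀ x, ∀ i ∈ s, ∀ j ∈ s, i ≠ j → x ∈ Set.Ioc (l i) (u i) →
      x ∈ Set.Ioc (l j) (u j) → ∀ b, ∃ p ∈ s, x ∈ Set.Ioc (l p) (u p) ∧ c p = b := by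
  classical
  induction s using Finset.induction_on_max_value l with
  | empty => exact ⟨fun _ => true, by simp⟩
  | insert a s ha hmax ih =>
    obtain ⟨c, hc⟩ := ih
    obtain rfl | hs := s.eq_empty_or_nonempty
    · exact ⟨c, by simp +contextual⟩
    -- Any point shared by `a` and an earlier interval lies in the one reaching furthest right,
    -- so it suffices to colour `a` differently from that one.
    obtain ⟨m, hm, hum⟩ := s.exists_max_image u hs
    have hma : m ≠ a := ne_of_mem_of_not_mem hm ha
    have shared : ∀ x, ∀ i ∈ s, x ∈ Set.Ioc (l i) (u i) → x ∈ Set.Ioc (l a) (u a) →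
        ∀ b, ∃ p ∈ insert a s, x ∈ Set.Ioc (l p) (u p) ∧ Function.update c a (!c m) p = b := by
      intro x i hi hxi hxa b
      have hxm : x ∈ Set.Ioc (l m) (u m) := ⟨(hmax m hm).trans_lt hxa.1, hxi.2.trans (hum i hi)⟩
      by_cases hb : c m = b
      · exact ⟨m, mem_insert_of_mem hm, hxm, by rwa [Function.update_of_ne hma]⟩
      · exact ⟨a, mem_insert_self a s, hxa, by simpa using Bool.not_eq.mpr hb⟩
    refine ⟨Function.update c a (!c m), fun x i hi j hj hij hxi hxj b => ?_⟩
    obtain rfl | his := mem_insert.mp hi <;> obtain rfl | hjs := mem_insert.mp hj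
    · exact absurd rfl hij
    · exact shared x j hjs hxj hxi b
    · exact shared x i his hxi hxj b
    · obtain ⟨p, hp, hxp, hcp⟩ := hc x i his j hjs hij hxi hxj b
      exact ⟨p, mem_insert_of_mem hp, hxp,
        by rwa [Function.update_of_ne (ne_of_mem_of_not_mem hp ha)]⟩

theorem exists_balanced_regrouping [DecidableEq ι] (S S' : Finset ι) (l u : ι → α) :
    ∃ T T' : Finset ι, T ∪ T' = S ∪ S' ∧ T ∩ T' = S ∩ S' ∧
      ∀ x, 2 ≤ #{i ∈ S | x ∈ Set.Ioc (l i) (u i)} + #{i ∈ S' | x ∈ Set.Ioc (l i) (u i)} →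
        1 ≤ #{i ∈ T | x ∈ Set.Ioc (l i) (u i)} ∧ 1 ≤ #{i ∈ T' | x ∈ Set.Ioc (l i) (u i)} := by
  obtain ⟨c, hc⟩ := exists_coloring_of_intervals (S ∪ S') l u
  let T (b : Bool) : Finset ι := {i ∈ S ∪ S' | i ∈ S ∩ S' ∨ c i = b}
  have covered : ∀ x,
      2 ≤ #{i ∈ S | x ∈ Set.Ioc (l i) (u i)} + #{i ∈ S' | x ∈ Set.Ioc (l i) (u i)} →
        ∀ b, 1 ≤ #{i ∈ T b | x ∈ Set.Ioc (l i) (u i)} := by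
    intro x hx b
    rw [Nat.one_le_iff_ne_zero, card_ne_zero]
    suffices ∃ p ∈ S ∪ S', x ∈ Set.Ioc (l p) (u p) ∧ (p ∈ S ∩ S' ∨ c p = b) by
      obtain ⟨p, hp, hxp, hpb⟩ := this
      exact ⟨p, mem_filter.mpr ⟨mem_filter.mpr ⟨hp, hpb⟩, hxp⟩⟩
    by_cases common : ∃ p ∈ S ∩ S', x ∈ Set.Ioc (l p) (u p)
    · obtain ⟨p, hp, hxp⟩ := common
      exact ⟨p, inter_subset_union hp, hxp, .inl hp⟩
    have hdisj : Disjoint {i ∈ S | x ∈ Set.Ioc (l i) (u i)} {i ∈ S' | x ∈ Set.Ioc (l i) (u i)} := by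
      refine disjoint_left.mpr fun p hp hp' => common ⟨p, ?_, (mem_filter.mp hp).2⟩
      exact mem_inter.mpr ⟨(mem_filter.mp hp).1, (mem_filter.mp hp').1⟩
    rw [← card_union_of_disjoint hdisj, ← filter_union] at hx
    obtain ⟨i, hi, j, hj, hij⟩ := one_lt_card.mp hx
    rw [mem_filter] at hi hj
    obtain ⟨p, hp, hxp, hcp⟩ := hc x i hi.1 j hj.1 hij hi.2 hj.2 b
    exact ⟨p, hp, hxp, .inr hcp⟩
  refine ⟨T true, T false, ?_, ?_, fun x hx => ⟨covered x hx true, covered x hx false⟩⟩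
  · ext i
    grind
  · ext i
    grind

end Intervals

theorem sum_add_sum_eq_of_union_inter_eq {ι M : Type*} [DecidableEq ι] [AddCommMonoid M]
    {S S' T T' : Finset ι} (hunion : T ∪ T' = S ∪ S') (hinter : T ∩ T' = S ∩ S') (g : ι → M) :
    ∑ i ∈ T, g i + ∑ i ∈ T', g i = ∑ i ∈ S, g i + ∑ i ∈ S', g i := by
  rw [← sum_union_inter, hunion, hinter, sum_union_inter]

theorem card_inter_add_card_inter_eq_of_union_inter_eq {ι : Type*} [DecidableEq ι]
    {S S' T T' : Finset ι} (hunion : T ∪ T' = S ∪ S') (hinter : T ∩ T' = S ∩ S') (U : Finset ι) :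
    #(U ∩ T) + #(U ∩ T') = #(U ∩ S) + #(U ∩ S') := by
  rw [← card_union_add_card_inter, ← inter_union_distrib_left, ← inter_inter_distrib_left, hunion,
    hinter, inter_union_distrib_left, inter_inter_distrib_left, card_union_add_card_inter]

section Channel

variable {K : ℕ} {nd nc : Fin (K + 1) → ℕ}

theorem mem_Uset {k : ℕ} {i : Fin (K + 1)} :
    i ∈ Uset K nd nc k ↔ i ≠ 0 ∧ (k : ℤ) ∈ Set.Ioc ((nc i : ℤ) - nd i) (nc i) := by
  simp [Uset]

theorem Uset_inter_eq_filter {S : Finset (Fin (K + 1))} (hS : 0 ∉ S) (k : ℕ) :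
    Uset K nd nc k ∩ S = {i ∈ S | (k : ℤ) ∈ Set.Ioc ((nc i : ℤ) - nd i) (nc i)} := by
  ext i
  rw [mem_inter, mem_Uset, mem_filter]
  have : i ∈ S → i ≠ 0 := fun hi => ne_of_mem_of_not_mem hi hS
  tauto

theorem sumBound_empty : sumBound K nd nc ∅ = nd 0 := by
  simp [sumBound]

theorem exists_regrouping_sumBound_lt {S S' : Finset (Fin (K + 1))} (hS : 0 ∉ S) (hS' : 0 ∉ S')
    {k : ℕ} (hk : k ∈ Icc 1 (nd 0)) (hkS : 2 ≤ #(Uset K nd nc k ∩ S))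
    (hkS' : Uset K nd nc k ∩ S' = ∅) :
    ∃ T T' : Finset (Fin (K + 1)), T ∪ T' = S ∪ S' ∧ T ∩ T' = S ∩ S' ∧
      sumBound K nd nc T + sumBound K nd nc T' < sumBound K nd nc S + sumBound K nd nc S' := by
  obtain ⟨T, T', hunion, hinter, hcover⟩ :=
    exists_balanced_regrouping S S' (fun i => (nc i : ℤ) - nd i) (fun i => (nc i : ℤ))
  refine ⟨T, T', hunion, hinter, ?_⟩
  have hTT' : 0 ∉ T ∪ T' := by simp [hunion, hS, hS']
  rw [notMem_union] at hTT'
  have hcover (m : ℕ) : 2 ≤ #(Uset K nd nc m ∩ S) + #(Uset K nd nc m ∩ S') →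
      1 ≤ #(Uset K nd nc m ∩ T) ∧ 1 ≤ #(Uset K nd nc m ∩ T') := by
    simpa only [Uset_inter_eq_filter, hS, hS', hTT', not_false_eq_true] using hcover m
  have hcard (m : ℕ) :=
    card_inter_add_card_inter_eq_of_union_inter_eq hunion hinter (Uset K nd nc m)
  have hfree := sum_add_sum_eq_of_union_inter_eq hunion hinter (ffree K nd nc)
  have hlevels : ∑ m ∈ Icc 1 (nd 0), (max #(Uset K nd nc m ∩ T) 1 + max #(Uset K nd nc m ∩ T') 1) <
      ∑ m ∈ Icc 1 (nd 0), (max #(Uset K nd nc m ∩ S) 1 + max #(Uset K nd nc m ∩ S') 1) := by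
    refine sum_lt_sum (fun m _ => ?_) ⟨k, hk, ?_⟩
    · have := hcard m
      have := hcover m
      omega
    · have := hcard k
      have := hcover k
      rw [← card_eq_zero] at hkS'
      omega
  rw [sum_add_distrib, sum_add_distrib] at hlevels
  unfold sumBound
  omega

theorem directGain_eq_ffree_add_card {i : Fin (K + 1)} (hi : i ≠ 0) (hcross : nc i ≤ nd 0 + nd i) :
    nd i = ffree K nd nc i + #{k ∈ Icc 1 (nd 0) | i ∈ Uset K nd nc k} := by
  have hlevels : {k ∈ Icc 1 (nd 0) | i ∈ Uset K nd nc k} =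
      Ioc (nc i - nd i) (min (nc i) (nd 0)) := by
    ext k
    simp only [mem_filter, mem_Uset, mem_Icc, mem_Ioc, Set.mem_Ioc, hi, ne_eq, not_false_eq_true,
      true_and]
    omega
  rw [hlevels, Nat.card_Ioc, ffree]
  omega

theorem sumBound_insert_lt {i : Fin (K + 1)} {S : Finset (Fin (K + 1))} {k : ℕ}
    (hk : k ∈ Icc 1 (nd 0)) (hik : i ∈ Uset K nd nc k) (hkS : Uset K nd nc k ∩ S = ∅) :
    sumBound K nd nc (insert i S) < sumBound K nd nc S + nd i := by
  have hiS : i ∉ S := disjoint_left.mp (disjoint_iff_inter_eq_empty.mpr hkS) hik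
  have hcard (m : ℕ) : #(Uset K nd nc m ∩ insert i S) =
      #(Uset K nd nc m ∩ S) + if i ∈ Uset K nd nc m then 1 else 0 := by
    split_ifs with h
    · rw [inter_insert_of_mem h, card_insert_of_notMem (by simp [hiS])]
    · rw [inter_insert_of_notMem h, add_zero]
  have hlevels : ∑ m ∈ Icc 1 (nd 0), max #(Uset K nd nc m ∩ insert i S) 1 <
      ∑ m ∈ Icc 1 (nd 0), (max #(Uset K nd nc m ∩ S) 1 + if i ∈ Uset K nd nc m then 1 else 0) := by
    refine sum_lt_sum (fun m _ => ?_) ⟨k, hk, ?_⟩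
    · rw [hcard]
      omega
    · rw [hcard, hkS, if_pos hik]
      simp
  obtain ⟨hi, hlow, -⟩ := mem_Uset.mp hik
  have hcross : nc i ≤ nd 0 + nd i := by
    have := (mem_Icc.mp hk).2
    omega
  have hdirect := directGain_eq_ffree_add_card hi hcross
  rw [sum_add_distrib, ← card_filter] at hlevels
  rw [sumBound, sumBound, sum_insert hiS]
  omega

variable {r : Fin (K + 1) → ℝ}

theorem sumRate_le_sumBound (hr : r ∈ outerRegion K nd nc) {S : Finset (Fin (K + 1))}
    (hS : 0 ∉ S) : r 0 + ∑ i ∈ S, r i ≤ sumBound K nd nc S := by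
  obtain rfl | hne := S.eq_empty_or_nonempty
  · simpa [sumBound_empty] using (hr.1 0).2
  · exact hr.2 S hS hne

theorem not_tightAt_sumRate_of_tightAt_sumRate (hr : r ∈ outerRegion K nd nc)
    {S S' : Finset (Fin (K + 1))} (hS : 0 ∉ S) (hS' : 0 ∉ S') {k : ℕ}
    (hk : k ∈ Nsolid K nd nc (.sumRate S)) (hk' : k ∈ Ndashed K nd nc (.sumRate S'))
    (ht : TightAt K nd nc r (.sumRate S)) : ¬ TightAt K nd nc r (.sumRate S') := by
  intro ht'
  simp only [Nsolid, Ndashed, mem_filter] at hk hk'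
  obtain ⟨T, T', hunion, hinter, hlt⟩ := exists_regrouping_sumBound_lt hS hS' hk.1 hk.2 hk'.2
  have hTT' : 0 ∉ T ∪ T' := by simp [hunion, hS, hS']
  rw [notMem_union] at hTT'
  have hsum := sum_add_sum_eq_of_union_inter_eq hunion hinter r
  have hT := sumRate_le_sumBound hr hTT'.1
  have hT' := sumRate_le_sumBound hr hTT'.2
  rify at hlt
  simp only [TightAt] at ht ht'
  linarith

theorem not_tightAt_sumRate_of_tightAt_indiv (hr : r ∈ outerRegion K nd nc) {i : Fin (K + 1)}
    {S : Finset (Fin (K + 1))} (hS : 0 ∉ S) {k : ℕ} (hk : k ∈ Nsolid K nd nc (.indiv i))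
    (hk' : k ∈ Ndashed K nd nc (.sumRate S)) (ht : TightAt K nd nc r (.indiv i)) :
    ¬ TightAt K nd nc r (.sumRate S) := by
  intro ht'
  obtain rfl | hi := eq_or_ne i 0
  · simp [Nsolid] at hk
  simp only [Nsolid, Ndashed, hi, if_false, mem_filter] at hk hk'
  have hlt := sumBound_insert_lt hk.1 hk.2 hk'.2
  have hiS : i ∉ S := disjoint_left.mp (disjoint_iff_inter_eq_empty.mpr hk'.2) hk.2
  have hle := sumRate_le_sumBound hr (S := insert i S) (by simp [hi.symm, hS])
  rw [sum_insert hiS] at hle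
  rify at hlt
  simp only [TightAt] at ht ht'
  linarith

theorem exists_tightAt_sumRate_of_mem_Ndashed {v : MTOConstraint K} (hv : v.Valid)
    (ht : TightAt K nd nc r v) {k : ℕ} (hk : k ∈ Ndashed K nd nc v) :
    ∃ S, 0 ∉ S ∧ TightAt K nd nc r (.sumRate S) ∧ k ∈ Ndashed K nd nc (.sumRate S) := by
  cases v with
  | sumRate S => exact ⟨S, hv.2, ht, hk⟩
  | indiv i =>
    obtain rfl | hi := eq_or_ne i 0
    · exact ⟨∅, notMem_empty 0, by simpa [TightAt, sumBound_empty] using ht,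
        by simpa [Ndashed] using hk⟩
    · simp [Ndashed, hi] at hk

theorem Nsolid_inter_Ndashed_eq_empty (hr : r ∈ outerRegion K nd nc) {v v' : MTOConstraint K}
    (hv : v.Valid) (hv' : v'.Valid) (ht : TightAt K nd nc r v) (ht' : TightAt K nd nc r v') :
    Nsolid K nd nc v ∩ Ndashed K nd nc v' = ∅ := by
  refine eq_empty_of_forall_notMem fun k hk => ?_
  obtain ⟨hsolid, hdashed⟩ := mem_inter.mp hk
  obtain ⟨S', hS', htS', hkS'⟩ := exists_tightAt_sumRate_of_mem_Ndashed hv' ht' hdashed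
  cases v with
  | indiv i => exact not_tightAt_sumRate_of_tightAt_indiv hr hS' hsolid hkS' ht htS'
  | sumRate S => exact not_tightAt_sumRate_of_tightAt_sumRate hr hv.2 hS' hsolid hkS' ht htS'

end Channel

theorem consistent_implies_compatible_general (K : ℕ) (nd nc : Fin (K + 1) → ℕ)
    (A : Set (MTOConstraint K)) (hvalid : ∀ v ∈ A, v.Valid)
    (hconsistent : ∃ r ∈ outerRegion K nd nc, ∀ v ∈ A, TightAt K nd nc r v) :
    ∀ v ∈ A, ∀ v' ∈ A, Compatible K nd nc v v' := by
  obtain ⟨r, hr, ht⟩ := hconsistent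
  intro v hv v' hv'
  exact ⟨Nsolid_inter_Ndashed_eq_empty hr (hvalid v hv) (hvalid v' hv') (ht v hv) (ht v' hv'),
    Nsolid_inter_Ndashed_eq_empty hr (hvalid v' hv') (hvalid v hv) (ht v' hv') (ht v hv)⟩

/-- If a collection of constraints of `C̄` is consistent — some point of `C̄` satisfies every
constraint in the collection with equality — then the collection is pairwise compatible. -/
theorem consistent_implies_compatible (K : ℕ) (hK : 1 ≤ K) (nd nc : Fin (K + 1) → ℕ)
    (hreg : ∀ i : Fin (K + 1), i ≠ 0 → nc i ≤ nd 0 + nd i)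
    (A : Set (MTOConstraint K))
    (hvalid : ∀ v ∈ A, v.Valid)
    (hconsistent : ∃ r ∈ outerRegion K nd nc, ∀ v ∈ A, TightAt K nd nc r v) :
    ∀ v ∈ A, ∀ v' ∈ A, Compatible K nd nc v v' := by
  exact consistent_implies_compatible_general K nd nc A hvalid hconsistent
end

section
/- Reciprocity of interference sets. Let K ≥ 1 and let n_00, n_11, …, n_KK and n_10, …, n_K0 be nonnegative integers. For each integer k define U_k^OTM = {i ∈ {1,…,K} : n_00 − n_i0 < k ≤ n_ii − n_i0 + n_00} (the users experiencing interference from level k of transmitter 0 in the one-to-many channel) and Ũ_k = {i ∈ {1,…,K} : n_i0 − n_ii < k ≤ n_i0} (the users causing interference on level k of receiver 0 in the reciprocal many-to-one channel with cross gains ñ_0i = n_i0). Then Ũ_k = U^OTM_{1 + n_00 − k} for every integer k; in particular, for every S ⊆ {1,…,K}, Σ_{k=1}^{n_00} |Ũ_k ∩ S| = Σ_{k=1}^{n_00} |U_k^OTM ∩ S| and Σ_{k=1}^{n_00} max(|Ũ_k ∩ S|, 1) = Σ_{k=1}^{n_00} max(|U_k^OTM ∩ S|, 1). -/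
/-!
The reflection `k ↦ 1 + n₀₀ - k` turns `n_{i0} - n_{ii} < k` into the upper bound and
`k ≤ n_{i0}` into the strict lower bound defining `U^OTM`; over the integers the shift by `1`
accounts for the exchange of strict and weak inequalities. Since the reflection permutes
`{1, …, n₀₀}`, every sum over these levels of a function of the interference set is preserved.
-/

open Finset

/-- In the one-to-many channel (direct gains `nd i = n_{ii}`, cross gains `g i = n_{i0}`),
the set of users experiencing interference from level `k` of transmitter 0:
`n_{00} − n_{i0} < k ≤ n_{ii} − n_{i0} + n_{00}`. -/
def UOTM (K n00 : ℕ) (nd g : ℕ → ℕ) (k : ℤ) : Finset ℕ :=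
  (Finset.Icc 1 K).filter fun i =>
    (n00 : ℤ) - (g i : ℤ) < k ∧ k ≤ (nd i : ℤ) - (g i : ℤ) + (n00 : ℤ)

/-- In the reciprocal many-to-one channel (cross gains `ñ_{0i} = n_{i0} = g i`), the set of
users causing interference on level `k` of receiver 0: `n_{i0} − n_{ii} < k ≤ n_{i0}`. -/
def Utilde (K : ℕ) (nd g : ℕ → ℕ) (k : ℤ) : Finset ℕ :=
  (Finset.Icc 1 K).filter fun i => (g i : ℤ) - (nd i : ℤ) < k ∧ k ≤ (g i : ℤ)

theorem sum_Icc_reflect {G M : Type*} [AddCommGroup G] [PartialOrder G]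
    [IsOrderedAddMonoid G] [LocallyFiniteOrder G] [AddCommMonoid M] (f : G → M) (a b : G) :
    ∑ x ∈ Icc a b, f (a + b - x) = ∑ x ∈ Icc a b, f x :=
  have reflect_mem_iff (x : G) : a + b - x ∈ Icc a b ↔ x ∈ Icc a b := by
    rw [← mem_coe, coe_Icc, Set.sub_mem_Icc_iff_right, add_sub_cancel_right,
      add_sub_cancel_left, ← coe_Icc, mem_coe]
  sum_equiv (Equiv.subLeft (a + b)) (fun x => (reflect_mem_iff x).symm) fun _ _ => rfl

theorem Utilde_eq_UOTM_reflect (K n00 : ℕ) (nd g : ℕ → ℕ) (k : ℤ) :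
    Utilde K nd g k = UOTM K n00 nd g (1 + (n00 : ℤ) - k) := by
  refine filter_congr fun i _ => ?_
  have lower_iff_upper : (g i : ℤ) - nd i < k ↔ 1 + (n00 : ℤ) - k ≤ nd i - g i + n00 := by omega
  have upper_iff_lower : k ≤ (g i : ℤ) ↔ (n00 : ℤ) - g i < 1 + n00 - k := by omega
  rw [lower_iff_upper, upper_iff_lower, and_comm]

theorem sum_comp_Utilde_eq_sum_comp_UOTM {M : Type*} [AddCommMonoid M] (K n00 : ℕ)
    (nd g : ℕ → ℕ) (F : Finset ℕ → M) :
    ∑ k ∈ Icc (1 : ℤ) n00, F (Utilde K nd g k) =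
      ∑ k ∈ Icc (1 : ℤ) n00, F (UOTM K n00 nd g k) :=
  calc
    _ = ∑ k ∈ Icc (1 : ℤ) n00, F (UOTM K n00 nd g (1 + n00 - k)) :=
      sum_congr rfl fun k _ => congrArg F (Utilde_eq_UOTM_reflect K n00 nd g k)
    _ = ∑ k ∈ Icc (1 : ℤ) n00, F (UOTM K n00 nd g k) :=
      sum_Icc_reflect (fun k => F (UOTM K n00 nd g k)) 1 n00

/-- Reciprocity of interference sets: `Ũ_k = U^OTM_{1 + n00 − k}` for every integer `k`;
in particular the level-wise interference counts of the one-to-many channel and of its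
reciprocal many-to-one channel agree for every subset `S ⊆ {1,…,K}`. -/
theorem reciprocity_of_interference_sets (K : ℕ) (hK : 1 ≤ K) (n00 : ℕ) (nd g : ℕ → ℕ) :
    (∀ k : ℤ, Utilde K nd g k = UOTM K n00 nd g (1 + (n00 : ℤ) - k)) ∧
    (∀ S ⊆ Finset.Icc 1 K,
      (∑ k ∈ Finset.Icc (1 : ℤ) (n00 : ℤ), (Utilde K nd g k ∩ S).card =
        ∑ k ∈ Finset.Icc (1 : ℤ) (n00 : ℤ), (UOTM K n00 nd g k ∩ S).card) ∧
      (∑ k ∈ Finset.Icc (1 : ℤ) (n00 : ℤ), max (Utilde K nd g k ∩ S).card 1 =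
        ∑ k ∈ Finset.Icc (1 : ℤ) (n00 : ℤ), max (UOTM K n00 nd g k ∩ S).card 1)) :=
  ⟨Utilde_eq_UOTM_reflect K n00 nd g, fun S _ =>
    ⟨sum_comp_Utilde_eq_sum_comp_UOTM K n00 nd g fun U => (U ∩ S).card,
      sum_comp_Utilde_eq_sum_comp_UOTM K n00 nd g fun U => max (U ∩ S).card 1⟩⟩
end

section
/- Gaussian-to-deterministic comparison identity for the many-to-one outer bound. Let m ≥ 1 and let n_00 ≥ 1 and, for 1 ≤ i ≤ m, n_ii ≥ 0 and n_0i ≥ 1 be integers satisfying: n_0i − n_ii ≤ n_{0,i+1} − n_{i+1,i+1} and n_0i < n_{0,i+1} for 1 ≤ i ≤ m−1, and n_0m − n_mm ≤ n_00. Let U_k = {i ∈ {1,…,m} : n_0i − n_ii < k ≤ n_0i} and S = {1,…,m}. Then Σ_{i=1}^{m} (n_ii − n_0i)⁺ + Σ_{i=1}^{m−1} (n_0i − (n_{0,i+1} − n_{i+1,i+1})⁺)⁺ + max(n_0m, n_00) = n_00 + Σ_{i=1}^{m} [(n_0i − n_00)⁺ + (n_ii − n_0i)⁺] + Σ_{k=1}^{n_00}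 (|U_k ∩ S| − 1)⁺, where x⁺ = max(x,0). -/
open Finset

/-! For each level `k` the monotonicity of `n_{0i} - n_{ii}` and `n_{0i}` makes `U_k` a set of
consecutive users, so `(|U_k| - 1)⁺` counts the pairs of neighbours `i, i + 1` in `U_k`, and these
are given by `n_{0,i+1} - n_{i+1,i+1} < k ≤ n_{0i}`. After exchanging the sums over `k` and `i`,
each pair is counted once for every level of `{1, …, n_{00}}` in this interval, that is
`(n_{0i} - (n_{0,i+1} - n_{i+1,i+1})⁺)⁺ - (n_{0i} - n_{00})⁺` times. The remaining term `i = m` is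
accounted for by `max(n_{0m}, n_{00}) = n_{00} + (n_{0m} - n_{00})⁺`. -/

section

variable {α β : Type*} [LinearOrder α] [Preorder β] {a b : α → β}

theorem ordConnected_setOf_lt_and_le {s : Set α} (hs : s.OrdConnected) (ha : MonotoneOn a s)
    (hb : MonotoneOn b s) (k : β) : {i ∈ s | a i < k ∧ k ≤ b i}.OrdConnected where
  out' := by
    rintro i ⟨hi, -, hki⟩ j ⟨hj, hjk, -⟩ l ⟨hil, hlj⟩
    have hl : l ∈ s := hs.out hi hj ⟨hil, hlj⟩
    exact ⟨hl, (ha hl hj hlj).trans_lt hjk, hki.trans (hb hi hl hil)⟩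

variable [Add α] [One α] [SuccAddOrder α] [NoMaxOrder α] {s : Finset α}

theorem filter_add_one_mem_eq_erase_max' (hs : (s : Set α).OrdConnected) (hne : s.Nonempty) :
    {i ∈ s | i + 1 ∈ s} = s.erase (s.max' hne) := by
  ext i
  simp only [mem_filter, mem_erase, and_comm (a := i ≠ _), and_congr_right_iff]
  intro hi
  constructor
  · intro hi'
    exact ((Order.covBy_add_one i).lt.trans_le (s.le_max' _ hi')).ne
  · intro hmax
    have hlt : i < s.max' hne := (s.le_max' i hi).lt_of_ne hmax
    exact hs.out hi (s.max'_mem hne) ⟨(Order.wcovBy_add_one i).le, Order.add_one_le_of_lt hlt⟩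

theorem card_filter_add_one_mem (hs : (s : Set α).OrdConnected) :
    #{i ∈ s | i + 1 ∈ s} = #s - 1 := by
  obtain rfl | hne := s.eq_empty_or_nonempty
  · rfl
  · rw [filter_add_one_mem_eq_erase_max' hs hne, card_erase_of_mem (s.max'_mem hne)]

theorem card_filter_lt_and_le_sub_one [DecidableLT β] [DecidableLE β]
    (hs : (s : Set α).OrdConnected) (ha : MonotoneOn a s) (hb : MonotoneOn b s) (k : β) :
    #{i ∈ s | a i < k ∧ k ≤ b i} - 1 =
      #{i ∈ {i ∈ s | i + 1 ∈ s} | a (i + 1) < k ∧ k ≤ b i} := by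
  have hconn : (({i ∈ s | a i < k ∧ k ≤ b i} : Finset α) : Set α).OrdConnected := by
    simpa only [coe_filter, mem_coe] using ordConnected_setOf_lt_and_le hs ha hb k
  rw [← card_filter_add_one_mem hconn, filter_filter, filter_filter]
  congr 1
  refine filter_congr fun i hi => ⟨?_, ?_⟩
  · rintro ⟨⟨-, hkb⟩, hmem⟩
    obtain ⟨hi', hak, -⟩ := mem_filter.mp hmem
    exact ⟨hi', hak, hkb⟩
  · rintro ⟨hi', hak, hkb⟩
    have hle : i ≤ i + 1 := (Order.wcovBy_add_one i).le
    exact ⟨⟨(ha hi hi' hle).trans_lt hak, hkb⟩,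
      mem_filter.mpr ⟨hi', hak, hkb.trans (hb hi hi' hle)⟩⟩

theorem sum_card_filter_lt_and_le_sub_one [DecidableLT β] [DecidableLE β] {κ : Type*}
    (hs : (s : Set α).OrdConnected) (ha : MonotoneOn a s) (hb : MonotoneOn b s) (t : Finset κ)
    (c : κ → β) :
    ∑ k ∈ t, (#{i ∈ s | a i < c k ∧ c k ≤ b i} - 1) =
      ∑ i ∈ s with i + 1 ∈ s, #{k ∈ t | a (i + 1) < c k ∧ c k ≤ b i} := by
  simp only [card_filter_lt_and_le_sub_one hs ha hb]
  exact (sum_card_bipartiteAbove_eq_sum_card_bipartiteBelow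
    fun i k => a (i + 1) < c k ∧ c k ≤ b i).symm

end

theorem card_filter_Icc_one_lt_and_le (x y : ℤ) (n : ℕ) :
    (#((Icc 1 n).filter fun k : ℕ => x < k ∧ k ≤ y) : ℤ) = max (min y n - max x 0) 0 := by
  have hIoc : ((Icc 1 n).filter fun k : ℕ => x < k ∧ k ≤ y) = Ioc x.toNat (min y n).toNat := by
    ext k
    simp only [mem_filter, mem_Icc, mem_Ioc]
    omega
  rw [hIoc, Nat.card_Ioc]
  omega

theorem max_sub_max_zero_eq_add_card {x : ℤ} {n : ℕ} (hx : x ≤ n) (y : ℤ) :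
    max (y - max x 0) 0 =
      max (y - n) 0 + #((Icc 1 n).filter fun k : ℕ => x < k ∧ k ≤ y) := by
  rw [card_filter_Icc_one_lt_and_le]
  omega

theorem filter_add_one_mem_Icc_one (m : ℕ) : {i ∈ Icc 1 m | i + 1 ∈ Icc 1 m} = Icc 1 (m - 1) := by
  ext i
  simp only [mem_filter, mem_Icc]
  omega

theorem monotoneOn_Icc_of_le_add_one {β : Type*} [Preorder β] {f : ℕ → β} {l m : ℕ}
    (h : ∀ i ∈ Icc l (m - 1), f i ≤ f (i + 1)) : MonotoneOn f (Set.Icc l m) :=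
  monotoneOn_of_le_add_one Set.ordConnected_Icc fun i _ hi hi' =>
    h i (mem_Icc.mpr ⟨hi.1, Nat.le_sub_one_of_lt hi'.2⟩)

theorem gaussian_deterministic_comparison_general {m : ℕ} (hm : 1 ≤ m) (n00 : ℕ) (nd nc : ℕ → ℤ)
    (hdiff : MonotoneOn (fun i => nc i - nd i) (Set.Icc 1 m))
    (hcross : MonotoneOn nc (Set.Icc 1 m)) (hlast : nc m - nd m ≤ n00) :
    (∑ i ∈ Icc 1 m, max (nd i - nc i) 0)
      + (∑ i ∈ Icc 1 (m - 1), max (nc i - max (nc (i + 1) - nd (i + 1)) 0) 0)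
      + max (nc m) n00
    = n00 + (∑ i ∈ Icc 1 m, (max (nc i - n00) 0 + max (nd i - nc i) 0))
      + ∑ k ∈ Icc 1 n00,
          ((#{i ∈ Icc 1 m | nc i - nd i < (k : ℤ) ∧ (k : ℤ) ≤ nc i} - 1 : ℕ) : ℤ) := by
  have hlevels : ∀ i ∈ Icc 1 (m - 1), max (nc i - max (nc (i + 1) - nd (i + 1)) 0) 0 =
      max (nc i - n00) 0
        + #((Icc 1 n00).filter fun k : ℕ => nc (i + 1) - nd (i + 1) < k ∧ k ≤ nc i) := by
    intro i hi
    have him : i + 1 ≤ m := by rw [mem_Icc] at hi; omega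
    have hle : nc (i + 1) - nd (i + 1) ≤ n00 :=
      (hdiff ⟨by omega, him⟩ ⟨hm, le_rfl⟩ him).trans hlast
    exact max_sub_max_zero_eq_add_card hle (nc i)
  have hdouble : ∑ k ∈ Icc 1 n00,
        (#{i ∈ Icc 1 m | nc i - nd i < (k : ℤ) ∧ (k : ℤ) ≤ nc i} - 1) =
      ∑ i ∈ Icc 1 (m - 1),
        #((Icc 1 n00).filter fun k : ℕ => nc (i + 1) - nd (i + 1) < k ∧ k ≤ nc i) := by
    rw [← coe_Icc] at hdiff hcross
    rw [← filter_add_one_mem_Icc_one]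
    exact sum_card_filter_lt_and_le_sub_one (coe_Icc 1 m ▸ Set.ordConnected_Icc) hdiff hcross _ _
  have htop : ∑ i ∈ Icc 1 m, max (nc i - n00) 0 =
      ∑ i ∈ Icc 1 (m - 1), max (nc i - n00) 0 + max (nc m - n00) 0 := by
    obtain ⟨m, rfl⟩ := Nat.exists_eq_add_of_le' hm
    exact sum_Icc_succ_top hm _
  have hmax : max (nc m) n00 = n00 + max (nc m - n00) 0 := by omega
  rw [sum_congr rfl hlevels, sum_add_distrib, sum_add_distrib, htop, hmax, ← Nat.cast_sum,
    ← Nat.cast_sum, hdouble]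
  ring

/-- Gaussian-to-deterministic comparison identity for the many-to-one outer bound.
With `nd i = n_{ii}` (direct gains), `nc i = n_{0i}` (cross gains, `nc 0 = n_{00}` is
written `n00`), `U_k = {i ∈ {1,…,m} : n_{0i} − n_{ii} < k ≤ n_{0i}}` and `S = {1,…,m}`,
the Gaussian sum-rate expression equals the deterministic one. -/
theorem gaussian_deterministic_comparison (m : ℕ) (hm : 1 ≤ m)
    (n00 : ℕ) (hn00 : 1 ≤ n00) (nd nc : ℕ → ℕ)
    (hnc : ∀ i ∈ Finset.Icc 1 m, 1 ≤ nc i)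
    (hord1 : ∀ i ∈ Finset.Icc 1 (m - 1),
      (nc i : ℤ) - (nd i : ℤ) ≤ (nc (i + 1) : ℤ) - (nd (i + 1) : ℤ))
    (hord2 : ∀ i ∈ Finset.Icc 1 (m - 1), nc i < nc (i + 1))
    (hlast : (nc m : ℤ) - (nd m : ℤ) ≤ (n00 : ℤ)) :
    (∑ i ∈ Finset.Icc 1 m, max ((nd i : ℤ) - (nc i : ℤ)) 0)
      + (∑ i ∈ Finset.Icc 1 (m - 1),
          max ((nc i : ℤ) - max ((nc (i + 1) : ℤ) - (nd (i + 1) : ℤ)) 0) 0)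
      + max (nc m : ℤ) (n00 : ℤ)
    = (n00 : ℤ)
      + (∑ i ∈ Finset.Icc 1 m,
          (max ((nc i : ℤ) - (n00 : ℤ)) 0 + max ((nd i : ℤ) - (nc i : ℤ)) 0))
      + ∑ k ∈ Finset.Icc 1 n00,
          (((((Finset.Icc 1 m).filter
            (fun i : ℕ => (nc i : ℤ) - (nd i : ℤ) < (k : ℤ) ∧ (k : ℤ) ≤ (nc i : ℤ))).card
            - 1 : ℕ) : ℤ)) :=
  gaussian_deterministic_comparison_general hm n00 (fun i => nd i) (fun i => nc i)
    (monotoneOn_Icc_of_le_add_one hord1)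
    (monotoneOn_Icc_of_le_add_one fun i hi => Int.ofNat_le.mpr (hord2 i hi).le) hlast
end

section
/- Let m ≥ 1 and let S_1,…,S_m and I_1,…,I_m be positive reals with I_i/S_i ≤ I_{i+1}/S_{i+1} for 1 ≤ i ≤ m−1. For 1 ≤ k ≤ m set T_k = (S_k/I_k) · Σ_{i=2}^{k} max(I_i/S_i, 1) (so T_1 = 0). Then, with log denoting the base-2 logarithm and x⁺ = max(x,0), Σ_{k=1}^{m} log(1 + S_k·T_k/(S_k + T_k)) ≤ −m + (m+1)·log(m+1) + Σ_{k=1}^{m} (log(S_k/I_k))⁺, where for k = 1 the summand on the left is interpreted as log(1 + 0) = 0. -/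
open Finset

/-- The effective interference-to-signal term
`T_k = (S_k / I_k) · ∑_{i=2}^{k} max(I_i / S_i, 1)` (so `T_1 = 0`). -/
noncomputable def Tterm (S I : ℕ → ℝ) (k : ℕ) : ℝ :=
  (S k / I k) * ∑ i ∈ Finset.Icc 2 k, max (I i / S i) 1

/-!
Since `S_k T_k / (S_k + T_k) ≤ T_k` and the ratios `I_i / S_i` increase, the `k`-th summand is at
most `log (k · max (S_k / I_k) 1) = log k + (log (S_k / I_k))⁺`. Summing leaves `log m!`, which
`2 ^ m * m! ≤ (m + 1) ^ m` bounds by `-m + m log (m + 1)`.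
-/

open scoped Nat

theorem two_pow_mul_factorial_le (m : ℕ) : 2 ^ m * m ! ≤ (m + 1) ^ m := by
  induction m with
  | zero => simp
  | succ n ih =>
    have bernoulli : 2 * (n + 1) ^ (n + 1) ≤ (n + 1 + 1) ^ (n + 1) :=
      calc 2 * (n + 1) ^ (n + 1)
          = (n + 1) ^ (n + 1) + (n + 1) * (n + 1) ^ n * 1 := by ring
        _ ≤ (n + 1 + 1) ^ (n + 1) := by
          simpa using
            pow_add_mul_le_add_pow (Nat.zero_le (n + 1)) (Nat.zero_le (2 * (n + 1) + 1)) (n + 1)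
    calc 2 ^ (n + 1) * (n + 1)!
        = 2 * (n + 1) * (2 ^ n * n !) := by rw [Nat.factorial_succ]; ring
      _ ≤ 2 * (n + 1) * (n + 1) ^ n := by gcongr
      _ = 2 * (n + 1) ^ (n + 1) := by ring
      _ ≤ (n + 1 + 1) ^ (n + 1) := bernoulli

theorem logb_two_factorial_le (m : ℕ) :
    Real.logb 2 (m ! : ℝ) ≤ -(m : ℝ) + m * Real.logb 2 ((m : ℝ) + 1) := by
  have factorial_le : (2 : ℝ) ^ m * m ! ≤ ((m : ℝ) + 1) ^ m := by
    exact_mod_cast two_pow_mul_factorial_le m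
  have log_le := Real.logb_le_logb_of_le one_lt_two (by positivity) factorial_le
  rw [Real.logb_mul (by positivity) (by positivity), Real.logb_pow, Real.logb_pow,
    Real.logb_self_eq_one one_lt_two] at log_le
  linarith

theorem sum_Icc_logb_natCast (b : ℝ) (m : ℕ) :
    ∑ k ∈ Icc 1 m, Real.logb b (k : ℝ) = Real.logb b (m ! : ℝ) := by
  have cast_ne_zero : ∀ k ∈ Icc 1 m, (k : ℝ) ≠ 0 := fun k hk =>
    Nat.cast_ne_zero.2 (Nat.one_le_iff_ne_zero.1 (mem_Icc.1 hk).1)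
  rw [← Real.logb_prod _ _ cast_ne_zero, ← Nat.cast_prod, ← Ico_add_one_right_eq_Icc,
    prod_Ico_id_eq_factorial]

theorem logb_max_one {b x : ℝ} (hb : 1 < b) (hx : 0 < x) :
    Real.logb b (max x 1) = max (Real.logb b x) 0 := by
  rw [(Real.strictMonoOn_logb hb).monotoneOn.map_max hx (Set.mem_Ioi.2 one_pos), Real.logb_one]

theorem mul_div_add_le_right {K : Type*} [Field K] [LinearOrder K] [IsStrictOrderedRing K]
    {x y : K} (hx : 0 ≤ x) (hy : 0 ≤ y) : x * y / (x + y) ≤ y := by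
  rw [mul_div_right_comm]
  exact mul_le_of_le_one_left hy (div_le_one_of_le₀ (le_add_of_nonneg_right hy) (add_nonneg hx hy))

section Tterm

variable {S I : ℕ → ℝ} {k : ℕ}

theorem Tterm_nonneg (hr : 0 ≤ S k / I k) : 0 ≤ Tterm S I k :=
  mul_nonneg hr (sum_nonneg fun _ _ => zero_le_one.trans (le_max_right _ _))

theorem Tterm_le (hk : 1 ≤ k) (hr : 0 ≤ S k / I k)
    (hle : ∀ i ∈ Icc 2 k, I i / S i ≤ I k / S k) :
    Tterm S I k ≤ (k - 1) * max (S k / I k) 1 := by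
  have card_Icc : ((#(Icc 2 k) : ℕ) : ℝ) = k - 1 := by
    rw [Nat.card_Icc, Nat.add_sub_add_right k 1 1, Nat.cast_pred hk]
  have sum_le : ∑ i ∈ Icc 2 k, max (I i / S i) 1 ≤ (k - 1) * max (I k / S k) 1 := by
    rw [← card_Icc, ← nsmul_eq_mul]
    exact sum_le_card_nsmul _ _ _ fun i hi => max_le_max_right 1 (hle i hi)
  have ratio_mul_max : S k / I k * max (I k / S k) 1 ≤ max (S k / I k) 1 := by
    rw [mul_max_of_nonneg _ _ hr, mul_one, max_comm, ← inv_div (S k)]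
    exact max_le_max_left _ mul_inv_le_one
  have sub_one_nonneg : (0 : ℝ) ≤ k - 1 := sub_nonneg.2 (Nat.one_le_cast.2 hk)
  calc Tterm S I k
      ≤ S k / I k * ((k - 1) * max (I k / S k) 1) := mul_le_mul_of_nonneg_left sum_le hr
    _ = (k - 1) * (S k / I k * max (I k / S k) 1) := mul_left_comm _ _ _
    _ ≤ (k - 1) * max (S k / I k) 1 := mul_le_mul_of_nonneg_left ratio_mul_max sub_one_nonneg

theorem logb_one_add_mul_Tterm_div_le {b : ℝ} (hb : 1 < b) (hk : 1 ≤ k) (hS : 0 < S k)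
    (hI : 0 < I k) (hle : ∀ i ∈ Icc 2 k, I i / S i ≤ I k / S k) :
    Real.logb b (1 + S k * Tterm S I k / (S k + Tterm S I k))
      ≤ Real.logb b k + max (Real.logb b (S k / I k)) 0 := by
  have ratio_pos : 0 < S k / I k := div_pos hS hI
  have T_nonneg : 0 ≤ Tterm S I k := Tterm_nonneg ratio_pos.le
  have k_pos : (0 : ℝ) < k := Nat.cast_pos.2 hk
  have one_le_max : 1 ≤ max (S k / I k) 1 := le_max_right _ _
  have arg_le : 1 + S k * Tterm S I k / (S k + Tterm S I k) ≤ k * max (S k / I k) 1 :=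
    calc 1 + S k * Tterm S I k / (S k + Tterm S I k)
        ≤ max (S k / I k) 1 + (k - 1) * max (S k / I k) 1 :=
          add_le_add one_le_max
            ((mul_div_add_le_right hS.le T_nonneg).trans (Tterm_le hk ratio_pos.le hle))
      _ = k * max (S k / I k) 1 := by ring
  calc Real.logb b (1 + S k * Tterm S I k / (S k + Tterm S I k))
      ≤ Real.logb b (k * max (S k / I k) 1) :=
        Real.logb_le_logb_of_le hb (by positivity) arg_le
    _ = Real.logb b k + max (Real.logb b (S k / I k)) 0 := by
        rw [Real.logb_mul k_pos.ne' (by positivity), logb_max_one hb ratio_pos]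

end Tterm

/-- Key estimate simplifying the Gaussian many-to-one sum-rate outer bound:
`∑_{k=1}^m log(1 + S_k T_k/(S_k + T_k)) ≤ −m + (m+1) log(m+1) + ∑_{k=1}^m (log(S_k/I_k))⁺`
(log base 2). -/
theorem sum_log_harmonic_bound (m : ℕ) (hm : 1 ≤ m) (S I : ℕ → ℝ)
    (hS : ∀ i ∈ Finset.Icc 1 m, 0 < S i)
    (hI : ∀ i ∈ Finset.Icc 1 m, 0 < I i)
    (hord : ∀ i ∈ Finset.Icc 1 (m - 1), I i / S i ≤ I (i + 1) / S (i + 1)) :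
    ∑ k ∈ Finset.Icc 1 m,
        Real.logb 2 (1 + S k * Tterm S I k / (S k + Tterm S I k))
      ≤ -(m : ℝ) + ((m : ℝ) + 1) * Real.logb 2 ((m : ℝ) + 1)
        + ∑ k ∈ Finset.Icc 1 m, max (Real.logb 2 (S k / I k)) 0 := by
  have ratio_mono : MonotoneOn (fun i => I i / S i) (Set.Icc 1 m) :=
    monotoneOn_of_le_add_one Set.ordConnected_Icc fun i _ hi hi' =>
      hord i (mem_Icc.2 ⟨hi.1, Nat.le_sub_one_of_lt hi'.2⟩)
  have ratio_le {k : ℕ} (hk : k ∈ Icc 1 m) : ∀ i ∈ Icc 2 k, I i / S i ≤ I k / S k := by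
    intro i hi
    rw [mem_Icc] at hi hk
    exact ratio_mono ⟨by lia, by lia⟩ hk hi.2
  have log_nonneg : 0 ≤ Real.logb 2 ((m : ℝ) + 1) := Real.logb_nonneg one_lt_two (by simp)
  calc ∑ k ∈ Icc 1 m, Real.logb 2 (1 + S k * Tterm S I k / (S k + Tterm S I k))
      ≤ ∑ k ∈ Icc 1 m, (Real.logb 2 k + max (Real.logb 2 (S k / I k)) 0) :=
        sum_le_sum fun k hk => logb_one_add_mul_Tterm_div_le one_lt_two (mem_Icc.1 hk).1
          (hS k hk) (hI k hk) (ratio_le hk)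
    _ = Real.logb 2 (m ! : ℝ) + ∑ k ∈ Icc 1 m, max (Real.logb 2 (S k / I k)) 0 := by
        rw [sum_add_distrib, sum_Icc_logb_natCast]
    _ ≤ -(m : ℝ) + ((m : ℝ) + 1) * Real.logb 2 ((m : ℝ) + 1)
          + ∑ k ∈ Icc 1 m, max (Real.logb 2 (S k / I k)) 0 := by
        gcongr
        linarith [logb_two_factorial_le m]
end

section
/- Suboptimality of Gaussian Han–Kobayashi rate splitting: MAC verification at receiver 0. Let β ≥ 2 be real and S_1, S_2 ∈ [0,1]. Set the four power fractions P_{1a} = S_1, P_{1b} = 1 − S_1, P_{2a} = S_2, P_{2b} = 1 − S_2. Let r_{1a}, r_{1b}, r_{2a}, r_{2b} be nonnegative reals satisfying, for i = 1, 2: r_{ia} ≤ log(1 + β·S_i), r_{ib} ≤ log(1 + β·(1 − S_i)), and r_{ia} + r_{ib} ≤ log(1 + β) (log base 2). Then for every nonempty subset T ⊆ {1a, 1b, 2a, 2b}: Σ_{t∈T} r_t ≤ log(1 + β²·Σ_{t∈T} P_t). In particular r_{1a} + r_{1b} + r_{2a} + r_{2b} ≤ log(1 + 2β²). -/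
open Finset

/-!
Receiver 0 decodes some codebooks of user 1, of total power `x ≤ 1`, and some of user 2, of total
power `y ≤ 1`. The constraints at receivers 1 and 2 bound their sum rate by
`log ((1 + β x) (1 + β y))`. Because `x y ≤ (x + y) / 2` and `β ≥ 2`, the product is at most
`1 + β² (x + y)`: squaring the gain makes up for decoding both users jointly.
-/

theorem one_add_mul_mul_one_add_mul_le {R : Type*} [CommRing R] [PartialOrder R] [IsOrderedRing R]
    {β x y : R} (hβ : 2 ≤ β) (hx : x ∈ Set.Icc 0 1) (hy : y ∈ Set.Icc 0 1) :
    (1 + β * x) * (1 + β * y) ≤ 1 + β ^ 2 * (x + y) := by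
  obtain ⟨hx₀, hx₁⟩ := hx
  obtain ⟨hy₀, hy₁⟩ := hy
  have hβ₀ : 0 ≤ β := zero_le_two.trans hβ
  rw [← sub_nonneg] at hβ hx₁ hy₁ ⊢
  calc
    0 ≤ β * ((β - 2) * (x + y * (1 - x)) + (x * (1 - y) + y * (1 - x))) := by positivity
    _ = 1 + β ^ 2 * (x + y) - (1 + β * x) * (1 + β * y) := by ring

theorem add_le_logb_one_add_sq_mul {b β x y u v : ℝ} (hb : 1 < b) (hβ : 2 ≤ β)
    (hx : x ∈ Set.Icc 0 1) (hy : y ∈ Set.Icc 0 1)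
    (hu : u ≤ Real.logb b (1 + β * x)) (hv : v ≤ Real.logb b (1 + β * y)) :
    u + v ≤ Real.logb b (1 + β ^ 2 * (x + y)) := by
  have hx₀ : 0 ≤ x := hx.1
  have hy₀ : 0 ≤ y := hy.1
  have hx_pos : 0 < 1 + β * x := by positivity
  have hy_pos : 0 < 1 + β * y := by positivity
  calc
    u + v ≤ Real.logb b (1 + β * x) + Real.logb b (1 + β * y) := add_le_add hu hv
    _ = Real.logb b ((1 + β * x) * (1 + β * y)) := (Real.logb_mul hx_pos.ne' hy_pos.ne').symm
    _ ≤ Real.logb b (1 + β ^ 2 * (x + y)) :=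
      Real.logb_le_logb_of_le hb (mul_pos hx_pos hy_pos) (one_add_mul_mul_one_add_mul_le hβ hx hy)

theorem sum_mem_Icc_of_subset {ι M : Type*} [AddCommMonoid M] [PartialOrder M]
    [IsOrderedAddMonoid M] {f : ι → M} {c : M} {s t : Finset ι} (hst : s ⊆ t)
    (hf : ∀ i ∈ t, 0 ≤ f i) (ht : ∑ i ∈ t, f i ≤ c) : ∑ i ∈ s, f i ∈ Set.Icc 0 c :=
  ⟨sum_nonneg fun i hi ↦ hf i (hst hi),
    (sum_le_sum_of_subset_of_nonneg hst fun i hi _ ↦ hf i hi).trans ht⟩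

section GaussianMAC

variable {ι : Type*} {g β : ℝ} {P r : ι → ℝ} {A B : Finset ι}

/-- The multiple-access constraints, in bits, at a unit-noise Gaussian receiver that decodes the
codebooks in `A`, received with power gain `g` and sent with powers `P`. Nonnegativity of the rates
is not part of the region, and the empty set adds only the constraint `0 ≤ log 1`. -/
def gaussianMACRegion (g : ℝ) (P : ι → ℝ) (A : Finset ι) : Set (ι → ℝ) :=
  {r | ∀ T ⊆ A, ∑ t ∈ T, r t ≤ Real.logb 2 (1 + g * ∑ t ∈ T, P t)}

theorem mem_gaussianMACRegion_pair [DecidableEq ι] {i j : ι} (hij : i ≠ j) :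
    r ∈ gaussianMACRegion g P {i, j} ↔
      r i ≤ Real.logb 2 (1 + g * P i) ∧ r j ≤ Real.logb 2 (1 + g * P j) ∧
        r i + r j ≤ Real.logb 2 (1 + g * (P i + P j)) := by
  constructor
  · intro hr
    exact ⟨by simpa using hr {i} (by simp), by simpa using hr {j} (by simp),
      by simpa [sum_pair hij] using hr {i, j} Subset.rfl⟩
  · rintro ⟨hi, hj, h_sum⟩ T hT
    have hT_cases : T = ∅ ∨ T = {i} ∨ T = {j} ∨ T = {i, j} := by
      have hT_coe : (T : Set ι) ⊆ {i, j} := by rwa [← coe_pair, coe_subset]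
      exact_mod_cast Set.subset_pair_iff_eq.mp hT_coe
    rcases hT_cases with rfl | rfl | rfl | rfl
    · simp
    · simpa using hi
    · simpa using hj
    · simpa [sum_pair hij] using h_sum

theorem gaussianMACRegion_inter_subset_union [DecidableEq ι] (hβ : 2 ≤ β)
    (hPA : ∀ t ∈ A, 0 ≤ P t) (hPB : ∀ t ∈ B, 0 ≤ P t)
    (hA : ∑ t ∈ A, P t ≤ 1) (hB : ∑ t ∈ B, P t ≤ 1) :
    gaussianMACRegion β P A ∩ gaussianMACRegion β P B ⊆ gaussianMACRegion (β ^ 2) P (A ∪ B) := by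
  rintro r ⟨hrA, hrB⟩ T hT
  have hTA : T ∩ A ⊆ A := inter_subset_right
  have hTB : T \ A ⊆ B := sdiff_le_iff.mpr hT
  rw [← sum_inter_add_sum_sdiff T A r, ← sum_inter_add_sum_sdiff T A P]
  exact add_le_logb_one_add_sq_mul one_lt_two hβ (sum_mem_Icc_of_subset hTA hPA hA)
    (sum_mem_Icc_of_subset hTB hPB hB) (hrA _ hTA) (hrB _ hTB)

theorem gaussian_HK_MAC_verification_general [DecidableEq ι] (hβ : 2 ≤ β)
    (hPA : ∀ t ∈ A, 0 ≤ P t) (hPB : ∀ t ∈ B, 0 ≤ P t)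
    (hA : ∑ t ∈ A, P t ≤ 1) (hB : ∑ t ∈ B, P t ≤ 1)
    (hrA : r ∈ gaussianMACRegion β P A) (hrB : r ∈ gaussianMACRegion β P B) :
    r ∈ gaussianMACRegion (β ^ 2) P (A ∪ B) ∧
      ∑ t ∈ A ∪ B, r t ≤ Real.logb 2 (1 + 2 * β ^ 2) := by
  have hr := gaussianMACRegion_inter_subset_union hβ hPA hPB hA hB ⟨hrA, hrB⟩
  refine ⟨hr, (hr _ Subset.rfl).trans ?_⟩
  have hP₀ : 0 ≤ ∑ t ∈ A ∪ B, P t :=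
    sum_nonneg fun t ht ↦ (mem_union.mp ht).elim (hPA t) (hPB t)
  have hP₂ : ∑ t ∈ A ∪ B, P t ≤ 2 := by
    have h_inter : 0 ≤ ∑ t ∈ A ∩ B, P t := sum_nonneg fun t ht ↦ hPA t (mem_inter.mp ht).1
    linarith [sum_union_inter (s₁ := A) (s₂ := B) (f := P)]
  refine Real.logb_le_logb_of_le one_lt_two (by positivity) ?_
  rw [mul_comm 2]
  gcongr

end GaussianMAC

/-- Suboptimality of Gaussian Han–Kobayashi rate splitting: MAC verification at receiver 0.
The four split rates `r 0 = r_{1a}, r 1 = r_{1b}, r 2 = r_{2a}, r 3 = r_{2b}` with power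
fractions `P = (S₁, 1−S₁, S₂, 1−S₂)` satisfying the two-user MAC constraints with gain `β`
at receivers 1 and 2 lie inside every MAC constraint with gain `β²` at receiver 0; in
particular the total sum rate is at most `log(1 + 2β²)` (log base 2). -/
theorem gaussian_HK_MAC_verification (β S1 S2 : ℝ) (hβ : 2 ≤ β)
    (hS1 : S1 ∈ Set.Icc (0 : ℝ) 1) (hS2 : S2 ∈ Set.Icc (0 : ℝ) 1)
    (r P : Fin 4 → ℝ)
    (hP : P = ![S1, 1 - S1, S2, 1 - S2])
    (hr : ∀ t, 0 ≤ r t)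
    (h1a : r 0 ≤ Real.logb 2 (1 + β * S1))
    (h1b : r 1 ≤ Real.logb 2 (1 + β * (1 - S1)))
    (h1 : r 0 + r 1 ≤ Real.logb 2 (1 + β))
    (h2a : r 2 ≤ Real.logb 2 (1 + β * S2))
    (h2b : r 3 ≤ Real.logb 2 (1 + β * (1 - S2)))
    (h2 : r 2 + r 3 ≤ Real.logb 2 (1 + β)) :
    (∀ T : Finset (Fin 4), T.Nonempty →
        ∑ t ∈ T, r t ≤ Real.logb 2 (1 + β ^ 2 * ∑ t ∈ T, P t)) ∧
    r 0 + r 1 + r 2 + r 3 ≤ Real.logb 2 (1 + 2 * β ^ 2) := by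
  subst hP
  set P : Fin 4 → ℝ := ![S1, 1 - S1, S2, 1 - S2]
  have hP1 : P 0 + P 1 = 1 := add_sub_cancel S1 1
  have hP2 : P 2 + P 3 = 1 := add_sub_cancel S2 1
  have hP_nonneg : ∀ t, 0 ≤ P t := by
    simpa [Fin.forall_fin_succ, P] using ⟨hS1.1, hS1.2, hS2.1, hS2.2⟩
  have hr1 : r ∈ gaussianMACRegion β P {0, 1} :=
    (mem_gaussianMACRegion_pair (by decide)).mpr ⟨h1a, h1b, by rwa [hP1, mul_one]⟩
  have hr2 : r ∈ gaussianMACRegion β P {2, 3} :=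
    (mem_gaussianMACRegion_pair (by decide)).mpr ⟨h2a, h2b, by rwa [hP2, mul_one]⟩
  have h_union : ({0, 1} ∪ {2, 3} : Finset (Fin 4)) = univ := by decide
  obtain ⟨h_region, h_sum⟩ := gaussian_HK_MAC_verification_general hβ
    (fun t _ ↦ hP_nonneg t) (fun t _ ↦ hP_nonneg t)
    (by rw [sum_pair (by decide), hP1]) (by rw [sum_pair (by decide), hP2]) hr1 hr2
  rw [h_union] at h_region h_sum
  exact ⟨fun T _ ↦ h_region T (subset_univ T), Fin.sum_univ_four r ▸ h_sum⟩
end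

section
/- One-to-many Gaussian outer bound versus deterministic region. Let m ≥ 1, let SNR_0, SNR_1, …, SNR_m be positive reals, and let INR_1, …, INR_m be reals with 1 ≤ INR_1 < INR_2 < … < INR_m. Then, with log the base-2 logarithm and x⁺ = max(x,0): log(1 + SNR_0/(1 + INR_m)) + log(1 + SNR_1 + INR_1) + Σ_{i=2}^{m} log(1 + SNR_i + INR_i/(1 + INR_{i−1})) ≤ 2(m+1) + (log SNR_0 − log INR_m)⁺ + max(log SNR_1, log INR_1) + Σ_{i=2}^{m} max(log SNR_i, log INR_i − log INR_{i−1}). That is, the genie-aided sum-rate outer bound for the one-to-many Gaussian interference channel is at most the corresponding deterministic-channel sum-rate expression (with n_ii = log SNR_i and n_i0 = log INR_i) plus an additive gap of at most 2(m+1) bits. -/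
open Finset

/-!
The bound holds term by term. Replacing `1 + INR` by `INR` in a denominator turns the argument of
each Gaussian logarithm into a sum of two or three terms, each at most the maximum that the
deterministic channel sees. The noise term `1` is among them: at receiver `0` the maximum with
`0 = log 1` covers it, and at the others it is below `INR 1`, respectively `INR i / INR (i - 1)`.
A sum of `k` terms costs at most `log k` bits over its largest term, so receiver `0` loses at most
one bit and each of the others at most `log 3`.
-/

section TermBounds

variable {b c s t u x y z : ℝ}

theorem logb_le_logb_add_max_logb (hb : 1 < b) (hc : 0 < c) (hx : 0 < x) (hy : 0 < y)
    (hz : 0 < z) (h : z ≤ c * max x y) :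
    Real.logb b z ≤ Real.logb b c + max (Real.logb b x) (Real.logb b y) := by
  have hmax : 0 < max x y := lt_max_of_lt_left hx
  calc
    Real.logb b z ≤ Real.logb b (c * max x y) := Real.logb_le_logb_of_le hb hz h
    _ = Real.logb b c + Real.logb b (max x y) := Real.logb_mul hc.ne' hmax.ne'
    _ = Real.logb b c + max (Real.logb b x) (Real.logb b y) := by
      rw [(Real.strictMonoOn_logb hb).monotoneOn.map_max hx hy]

theorem logb_one_add_div_one_add_le (hb : 1 < b) (hx : 0 < x) (hy : 0 < y) :
    Real.logb b (1 + x / (1 + y)) ≤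
      Real.logb b 2 + max (Real.logb b x - Real.logb b y) 0 := by
  have hdiv : x / (1 + y) ≤ x / y :=
    div_le_div_of_nonneg_left hx.le hy (lt_one_add y).le
  have hsum : 1 + x / (1 + y) ≤ 2 * max (x / y) 1 := by
    linarith [le_max_left (x / y) 1, le_max_right (x / y) 1]
  rw [← Real.logb_div hx.ne' hy.ne', ← Real.logb_one (b := b)]
  exact logb_le_logb_add_max_logb hb two_pos (by positivity) one_pos (by positivity) hsum

theorem logb_one_add_add_le (hb : 1 < b) (hs : 0 < s) (ht : 0 ≤ t) (htu : t ≤ u) (hu : 1 ≤ u) :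
    Real.logb b (1 + s + t) ≤ Real.logb b 3 + max (Real.logb b s) (Real.logb b u) := by
  have hsum : 1 + s + t ≤ 3 * max s u := by
    linarith [le_max_left s u, le_max_right s u]
  exact logb_le_logb_add_max_logb hb three_pos hs (by linarith) (by positivity) hsum

theorem logb_one_add_add_div_one_add_le (hb : 1 < b) (hs : 0 < s) (hy : 0 < y) (hyx : y ≤ x) :
    Real.logb b (1 + s + x / (1 + y)) ≤
      Real.logb b 3 + max (Real.logb b s) (Real.logb b x - Real.logb b y) := by
  have hx : 0 < x := hy.trans_le hyx
  have hdiv : x / (1 + y) ≤ x / y :=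
    div_le_div_of_nonneg_left hx.le hy (lt_one_add y).le
  rw [← Real.logb_div hx.ne' hy.ne']
  exact logb_one_add_add_le hb hs (by positivity) hdiv ((one_le_div hy).mpr hyx)

end TermBounds

theorem monotoneOn_Icc_of_le_add_one_s16 {α : Type*} [Preorder α] {f : ℕ → α} {k n : ℕ}
    (hf : ∀ i ∈ Finset.Icc k (n - 1), f i ≤ f (i + 1)) : MonotoneOn f (Set.Icc k n) :=
  monotoneOn_of_le_add_one Set.ordConnected_Icc fun i _ hi hi' =>
    hf i (Finset.mem_Icc.mpr ⟨hi.1, Nat.le_sub_one_of_lt hi'.2⟩)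

theorem one_add_mul_logb_two_three_le (m : ℕ) : 1 + m * Real.logb 2 3 ≤ 2 * ((m : ℝ) + 1) := by
  have hlog : Real.logb 2 3 ≤ 2 := by
    rw [Real.logb_le_iff_le_rpow one_lt_two three_pos]
    norm_num
  linarith [mul_le_mul_of_nonneg_left hlog m.cast_nonneg]

/-- The genie-aided upper bound on the sum rate `r 0 + ⋯ + r m` of the one-to-many Gaussian
interference channel, in bits. Receiver `1` is kept apart from the sum because its denominator is
`1`, whereas the common formula would involve `INR 0`, which has no meaning for the channel. -/
noncomputable def gaussianSumRateBound (m : ℕ) (SNR INR : ℕ → ℝ) : ℝ :=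
  Real.logb 2 (1 + SNR 0 / (1 + INR m)) + Real.logb 2 (1 + SNR 1 + INR 1)
    + ∑ i ∈ Finset.Icc 2 m, Real.logb 2 (1 + SNR i + INR i / (1 + INR (i - 1)))

/-- The sum-rate expression of the deterministic one-to-many channel with direct gains
`log SNR i` and cross gains `log INR i`, to which the Gaussian bound is compared. -/
noncomputable def deterministicSumRate (m : ℕ) (SNR INR : ℕ → ℝ) : ℝ :=
  max (Real.logb 2 (SNR 0) - Real.logb 2 (INR m)) 0
    + max (Real.logb 2 (SNR 1)) (Real.logb 2 (INR 1))
    + ∑ i ∈ Finset.Icc 2 m,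
        max (Real.logb 2 (SNR i)) (Real.logb 2 (INR i) - Real.logb 2 (INR (i - 1)))

theorem one_to_many_outer_vs_deterministic_general (m : ℕ) (hm : 1 ≤ m) (SNR INR : ℕ → ℝ)
    (hSNR : ∀ i ≤ m, 0 < SNR i) (hINR1 : 1 ≤ INR 1) (hINR : MonotoneOn INR (Set.Icc 1 m)) :
    gaussianSumRateBound m SNR INR ≤
      1 + m * Real.logb 2 3 + deterministicSumRate m SNR INR := by
  have one_le_INR : ∀ i ∈ Set.Icc 1 m, 1 ≤ INR i := fun i hi =>
    hINR1.trans (hINR ⟨le_rfl, hm⟩ hi hi.1)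
  have receiver_zero := logb_one_add_div_one_add_le one_lt_two (hSNR 0 m.zero_le)
    (one_pos.trans_le (one_le_INR m ⟨hm, le_rfl⟩))
  have receiver_one := logb_one_add_add_le one_lt_two (hSNR 1 hm)
    (zero_le_one.trans hINR1) le_rfl hINR1
  have later_receivers : ∀ i ∈ Finset.Icc 2 m,
      Real.logb 2 (1 + SNR i + INR i / (1 + INR (i - 1))) ≤ Real.logb 2 3 +
        max (Real.logb 2 (SNR i)) (Real.logb 2 (INR i) - Real.logb 2 (INR (i - 1))) := by
    intro i hi
    obtain ⟨h2i, him⟩ := Finset.mem_Icc.mp hi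
    have hpred : i - 1 ∈ Set.Icc 1 m := ⟨by omega, by omega⟩
    exact logb_one_add_add_div_one_add_le one_lt_two (hSNR i him)
      (one_pos.trans_le (one_le_INR _ hpred)) (hINR hpred ⟨by omega, him⟩ (Nat.sub_le i 1))
  have later_sum := Finset.sum_le_sum later_receivers
  have hcard : ((Finset.Icc 2 m).card : ℝ) = m - 1 := by
    rw [Nat.card_Icc, Nat.add_sub_add_right m 1 1, Nat.cast_sub hm, Nat.cast_one]
  rw [Finset.sum_add_distrib, Finset.sum_const, nsmul_eq_mul, hcard] at later_sum
  rw [Real.logb_self_eq_one one_lt_two] at receiver_zero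
  unfold gaussianSumRateBound deterministicSumRate
  linarith

/-- One-to-many Gaussian outer bound versus deterministic region: the genie-aided sum-rate
outer bound for the one-to-many Gaussian interference channel is at most the corresponding
deterministic-channel sum-rate expression (with `n_{ii} = log SNR_i`, `n_{i0} = log INR_i`)
plus an additive gap of at most `2(m+1)` bits (log base 2). -/
theorem one_to_many_outer_vs_deterministic (m : ℕ) (hm : 1 ≤ m) (SNR INR : ℕ → ℝ)
    (hSNR : ∀ i ≤ m, 0 < SNR i)
    (hINR1 : 1 ≤ INR 1)
    (hINRmono : ∀ i ∈ Finset.Icc 1 (m - 1), INR i < INR (i + 1)) :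
    Real.logb 2 (1 + SNR 0 / (1 + INR m)) + Real.logb 2 (1 + SNR 1 + INR 1)
        + ∑ i ∈ Finset.Icc 2 m, Real.logb 2 (1 + SNR i + INR i / (1 + INR (i - 1)))
      ≤ 2 * ((m : ℝ) + 1)
        + max (Real.logb 2 (SNR 0) - Real.logb 2 (INR m)) 0
        + max (Real.logb 2 (SNR 1)) (Real.logb 2 (INR 1))
        + ∑ i ∈ Finset.Icc 2 m,
            max (Real.logb 2 (SNR i)) (Real.logb 2 (INR i) - Real.logb 2 (INR (i - 1))) := by
  have hgap := one_to_many_outer_vs_deterministic_general m hm SNR INR hSNR hINR1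
    (monotoneOn_Icc_of_le_add_one_s16 fun i hi => (hINRmono i hi).le)
  unfold gaussianSumRateBound deterministicSumRate at hgap
  linarith [one_add_mul_logb_two_three_le m]
end
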